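/- arXiv:solv-int/9903014 — 2 statements merged into one kernel-verified Lean document; each statement's English description precedes it below -/
import Mathlib

section
/- Let u be a smooth solution of P_II[α] on an open interval I ⊆ ℝ, and let ψ_0 be a nowhere-vanishing smooth function on I with ψ_0' = u·ψ_0. Set w = −u' − u² + 2z, and define the sequences ψ_n, φ_n and the Hankel determinants τ_N from w and ψ_0. Then for every integer N such that τ_N and τ_{N+1} are nowhere zero on I, the function U = τ_{N+1}'/τ_{N+1} − τ_N'/τ_N (that is, U = (log(τ_{N+1}/τ_N))') is a solution of P_II[α+N] on I. -/
/-- The Hankel determinant `τ_N` built from the sequences `ψ` (for `N > 0`) and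
`φ` (for `N < 0`); `τ_0 = 1` (determinant of the empty matrix). -/
noncomputable def hankelTau (ψ φ : ℕ → ℝ → ℝ) (N : ℤ) : ℝ → ℝ :=
  fun z =>
    if 0 ≤ N then
      Matrix.det (Matrix.of fun i j : Fin N.toNat => ψ ((i : ℕ) + (j : ℕ)) z)
    else
      Matrix.det (Matrix.of fun i j : Fin (-N).toNat => φ ((i : ℕ) + (j : ℕ)) z)

/-!
Put `f = φ₀` and `g = ψ₀`. The equation P_II[α] for `u = g' / g` amounts to the symmetric system
`f'' = 2 (z - f g) f`, `g'' = 2 (z - f g) g` with constant Wronskian `g' f - f' g = 2 α`.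
Exchanging `f` and `g` turns `α` into `-α` and `τ_N` into `τ_{-N}`, and `-U` solves P_II[-β - 1]
when `U` solves P_II[β], so it suffices to treat `N ≥ 0`.

The generating series of the `ψ_n` is a formal solution of a Riccati equation, and one step of its
continued fraction expansion is the Bäcklund transformation `(f, g) ↦ (1 / g, g (f g + (log g)''))`
of the system. It raises the Wronskian by `2`, and the determinants satisfy
`τ_{n+1}[f, g] = g τ_n[1 / g, g (f g + (log g)'')]`. Since Hirota's bilinear form of P_II is
covariant under the gauge transformation `(τ_{n+1}, τ_n) ↦ (g τ_{n+1}, g τ_n)`, it follows by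
induction on `n` for the pair `(τ_{n+1}, τ_n)`.

The successive functions `g` may have zeros, or even vanish identically. The bilinear equations are
therefore proved in the fraction field of the polynomial ring in `z, f, f', g, g'` with the
derivation given by the system, where the generic Wronskian forces every successive `g` to be
nonzero; being polynomial identities, they can then be evaluated along any solution.
-/

open Matrix PowerSeries

namespace PainleveII

section Hankel

variable {R S : Type*} [CommRing R] [CommRing S]

/-- The Hankel determinant of size `n` of a sequence. -/
def hankelDet (a : ℕ → R) (n : ℕ) : R :=
  det (of fun i j : Fin n => a (i + j))

@[simp] lemma hankelDet_zero (a : ℕ → R) : hankelDet a 0 = 1 := det_fin_zero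

@[simp] lemma hankelDet_one (a : ℕ → R) : hankelDet a 1 = a 0 := by simp [hankelDet]

lemma map_hankelDet (σ : R →+* S) (a : ℕ → R) (n : ℕ) :
    σ (hankelDet a n) = hankelDet (fun k => σ (a k)) n :=
  σ.map_det _

lemma hankelDet_const_mul (c : R) (a : ℕ → R) (n : ℕ) :
    hankelDet (fun k => c * a k) n = c ^ n * hankelDet a n := by
  have h := det_smul (of fun i j : Fin n => a (i + j)) c
  rwa [Fintype.card_fin] at h

/-- The lower triangular Toeplitz matrix of a sequence. -/
def lowerToeplitz (y : ℕ → R) (n : ℕ) : Matrix (Fin n) (Fin n) R :=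
  of fun i j => if j ≤ i then y (i - j) else 0

lemma det_lowerToeplitz (y : ℕ → R) (n : ℕ) : (lowerToeplitz y n).det = y 0 ^ n := by
  rw [det_of_isLowerTriangular]
  · simp [lowerToeplitz]
  · intro i j hij
    simp [lowerToeplitz, not_le.2 (show i < j from hij)]

lemma lowerToeplitz_mulVec_apply (y v : ℕ → R) {n : ℕ} (i : Fin n) :
    (lowerToeplitz y n *ᵥ fun k => v k) i =
      ∑ k ∈ Finset.range (i + 1), y (i - k) * v k := by
  have h := Fin.sum_univ_eq_sum_range (fun k => if k ≤ i then y (i - k) * v k else 0) n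
  simp only [← Fin.le_def] at h
  simp only [mulVec, dotProduct, lowerToeplitz, of_apply, ite_mul, zero_mul, h,
    ← Finset.sum_filter]
  congr 1
  ext k
  simp only [Finset.mem_filter, Finset.mem_range]
  omega

/-- The infinite matrix `1 ⊕ (s (i + j))`. -/
def oneSumHankel (s : ℕ → R) : ℕ → ℕ → R
  | 0, 0 => 1
  | 0, _ + 1 => 0
  | _ + 1, 0 => 0
  | i + 1, j + 1 => s (i + j)

lemma det_oneSumHankel (s : ℕ → R) (n : ℕ) :
    det (of fun i j : Fin (n + 1) => oneSumHankel s i j) = hankelDet s n := by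
  rw [det_succ_row_zero, Fin.sum_univ_succ]
  simp [oneSumHankel, hankelDet, submatrix]

lemma sum_range_add_tail (s a : ℕ → R) (i j : ℕ) :
    ∑ k ∈ Finset.range (i + j), s (i + j - 1 - k) * a k =
      ∑ k ∈ Finset.range j, s (i + (j - 1 - k)) * a k +
        ∑ k ∈ Finset.range i, s (i - 1 - k) * a (k + j) := by
  rw [add_comm i j, Finset.sum_range_add]
  congr 1 <;> refine Finset.sum_congr rfl fun k hk => ?_
  · have := Finset.mem_range.1 hk
    congr 2
    omega
  · rw [add_comm j k]
    congr 2
    omega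

/-- The coefficients of `1 - β X - X² ∑ s_k X^k`. -/
def convergentDenominator (β : R) (s : ℕ → R) : ℕ → R
  | 0 => 1
  | 1 => -β
  | k + 2 => -s k

lemma sum_convergentDenominator_mul (β : R) (s v : ℕ → R) (i : ℕ) :
    ∑ k ∈ Finset.range (i + 1 + 1), convergentDenominator β s (i + 1 - k) * v k =
      v (i + 1) - (β * v i + ∑ k ∈ Finset.range i, s (i - 1 - k) * v k) := by
  have htail : ∑ k ∈ Finset.range i, convergentDenominator β s (i + 1 - k) * v k =
      -∑ k ∈ Finset.range i, s (i - 1 - k) * v k := by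
    rw [← Finset.sum_neg_distrib]
    refine Finset.sum_congr rfl fun k hk => ?_
    have := Finset.mem_range.1 hk
    rw [show i + 1 - k = i - 1 - k + 2 by omega, convergentDenominator, neg_mul]
  rw [Finset.sum_range_succ, Finset.sum_range_succ, htail, Nat.add_sub_cancel_left, Nat.sub_self]
  simp only [convergentDenominator]
  ring

-- The recurrence says `A * (1 - β X - X² S) = a₀` for the generating series `A` and `S`.
lemma lowerToeplitz_mul_hankel {β : R} {a s : ℕ → R}
    (h : ∀ m, a (m + 1) = β * a m + ∑ k ∈ Finset.range m, s (m - 1 - k) * a k) (n : ℕ) :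
    lowerToeplitz (convergentDenominator β s) (n + 1) * of (fun i j : Fin (n + 1) => a (i + j)) =
      of (fun i j : Fin (n + 1) => oneSumHankel s i j) * (lowerToeplitz a (n + 1))ᵀ := by
  ext i j
  have hl : (lowerToeplitz (convergentDenominator β s) (n + 1) *
      of (fun i j : Fin (n + 1) => a (i + j))) i j = _ :=
    lowerToeplitz_mulVec_apply (convergentDenominator β s) (fun k => a (k + j)) i
  have hr : (lowerToeplitz a (n + 1) *
      (of fun i j : Fin (n + 1) => oneSumHankel s i j)ᵀ) j i = _ :=
    lowerToeplitz_mulVec_apply a (oneSumHankel s i) j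
  rw [hl, ← transpose_apply (_ * (lowerToeplitz a (n + 1))ᵀ) j i, transpose_mul,
    transpose_transpose, hr, Finset.sum_range_succ' (fun k => a (j - k) * _)]
  obtain ⟨_ | i, hi⟩ := i
  · simp [oneSumHankel, convergentDenominator]
  have hrec := h (i + j)
  rw [sum_range_add_tail, ← Finset.sum_range_reflect] at hrec
  have hhead : ∑ k ∈ Finset.range j, s (i + (j - 1 - (j - 1 - k))) * a (j - 1 - k) =
      ∑ k ∈ Finset.range j, a (j - (k + 1)) * s (i + k) := by
    refine Finset.sum_congr rfl fun k hk => ?_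
    have := Finset.mem_range.1 hk
    rw [mul_comm, show (j : ℕ) - 1 - (j - 1 - k) = k by omega,
      show (j : ℕ) - 1 - k = j - (k + 1) by omega]
  simp only [sum_convergentDenominator_mul, oneSumHankel, add_right_comm i 1 (j : ℕ), hrec, hhead,
    mul_zero, add_zero]
  ring

lemma hankelDet_succ_of_recurrence {β : R} {a s : ℕ → R}
    (h : ∀ m, a (m + 1) = β * a m + ∑ k ∈ Finset.range m, s (m - 1 - k) * a k) (n : ℕ) :
    hankelDet a (n + 1) = a 0 ^ (n + 1) * hankelDet s n := by
  have hdet := congrArg det (lowerToeplitz_mul_hankel h n)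
  rw [det_mul, det_mul, det_transpose, det_lowerToeplitz, det_lowerToeplitz,
    det_oneSumHankel, convergentDenominator, one_pow, one_mul, mul_comm] at hdet
  exact hdet

end Hankel

section RiccatiSeries

variable {A R : Type*} [CommRing A] [CommRing R] [Algebra A R]

/-- A derivation of `R`, applied to the coefficients of power series over `R`. -/
noncomputable def coeffDerivation (D : Derivation A R R) : Derivation A R⟦X⟧ R⟦X⟧ :=
  Derivation.mk'
    { toFun := fun F => .mk fun n => D (coeff n F)
      map_add' := fun F G => by ext; simp
      map_smul' := fun c F => by ext; simp [-zsmul_eq_mul] }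
    fun F G => by
      ext n
      have hswap := Finset.Nat.sum_antidiagonal_swap (n := n)
        (f := fun p => coeff p.1 G * D (coeff p.2 F))
      simp only [Prod.fst_swap, Prod.snd_swap] at hswap
      simp [coeff_mul, Finset.sum_add_distrib, hswap]

@[simp] lemma coeff_coeffDerivation (D : Derivation A R R) (F : R⟦X⟧) (n : ℕ) :
    coeff n (coeffDerivation D F) = D (coeff n F) := by
  simp [coeffDerivation]

@[simp] lemma coeffDerivation_C (D : Derivation A R R) (r : R) :
    coeffDerivation D (C r) = C (D r) := by
  ext n
  rcases n with _ | n <;> simp [coeff_C]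

@[simp] lemma coeffDerivation_X (D : Derivation A R R) : coeffDerivation D (X : R⟦X⟧) = 0 := by
  ext n
  simp [coeff_X, apply_ite]

lemma eq_zero_of_eq_X_mul_derivation {D : Derivation A R R} {E H : R⟦X⟧}
    (h : E = X * (coeffDerivation D E + H * E)) : E = 0 := by
  ext n
  induction n using Nat.strong_induction_on with
  | _ n ih =>
    rcases n with _ | n
    · rw [h, coeff_zero_X_mul, map_zero]
    · rw [h, coeff_succ_X_mul, map_add, coeff_coeffDerivation, ih n n.lt_succ_self, map_zero,
        map_zero, map_zero, zero_add, coeff_mul]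
      refine Finset.sum_eq_zero fun p hp => ?_
      rw [ih p.2 (Finset.Nat.antidiagonal.snd_lt hp), map_zero, mul_zero]

lemma coeff_succ_X_sq_mul_mul (F G : R⟦X⟧) (n : ℕ) :
    coeff (n + 1) (X ^ 2 * (F * G)) =
      ∑ k ∈ Finset.range n, coeff k F * coeff (n - 1 - k) G := by
  rw [pow_two, mul_assoc, coeff_succ_X_mul]
  rcases n with _ | n
  · simp
  · rw [coeff_succ_X_mul, coeff_mul, Finset.Nat.sum_antidiagonal_eq_sum_range_succ_mk]
    simp

/-- The sequence `a₀ = g`, `aₙ₊₁ = D aₙ + f ∑ aₖ aₙ₋₁₋ₖ`, whose generating series is a formal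
solution of a Riccati equation. -/
def riccatiSeq (D : Derivation A R R) (f g : R) : ℕ → R
  | 0 => g
  | n + 1 => D (riccatiSeq D f g n) +
      f * ∑ k : Fin n, riccatiSeq D f g k * riccatiSeq D f g (n - 1 - k)

lemma riccatiSeq_zero (D : Derivation A R R) (f g : R) : riccatiSeq D f g 0 = g := by
  rw [riccatiSeq]

lemma riccatiSeq_succ (D : Derivation A R R) (f g : R) (n : ℕ) :
    riccatiSeq D f g (n + 1) = D (riccatiSeq D f g n) +
      f * ∑ k ∈ Finset.range n, riccatiSeq D f g k * riccatiSeq D f g (n - 1 - k) := by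
  rw [riccatiSeq, Finset.sum_range]

lemma mk_riccatiSeq (D : Derivation A R R) (f g : R) :
    mk (riccatiSeq D f g) = C g + X * coeffDerivation D (mk (riccatiSeq D f g)) +
      C f * (X ^ 2 * (mk (riccatiSeq D f g) * mk (riccatiSeq D f g))) := by
  ext n
  rcases n with _ | n
  · simp [riccatiSeq_zero]
  · simp only [map_add, coeff_C_mul, coeff_succ_X_sq_mul_mul, coeff_succ_X_mul, coeff_mk,
      coeff_coeffDerivation, coeff_C, n.succ_ne_zero, if_false, zero_add, riccatiSeq_succ]

end RiccatiSeries

section BacklundStep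

variable {A K : Type*} [CommRing A] [Field K] [Algebra A K] (D : Derivation A K K) (f g : K)

/-- The Bäcklund transformation `(f, g) ↦ (1 / g, g (f g + (log g)''))`; this is its second
component. -/
def backlundSnd : K := f * g ^ 2 + D (D g) - D g ^ 2 / g

variable {g}

lemma mk_riccatiSeq_mul_eq_C_sq (hg : g ≠ 0) :
    mk (riccatiSeq D f g) *
      (C g - X * C (D g) - X ^ 2 * mk (riccatiSeq D g⁻¹ (backlundSnd D f g))) = C (g ^ 2) := by
  set F := mk (riccatiSeq D f g)
  set G := mk (riccatiSeq D g⁻¹ (backlundSnd D f g))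
  have hF : F = C g + X * coeffDerivation D F + C f * (X ^ 2 * (F * F)) := mk_riccatiSeq D f g
  have hG : G = C (backlundSnd D f g) + X * coeffDerivation D G + C g⁻¹ * (X ^ 2 * (G * G)) :=
    mk_riccatiSeq D _ _
  have hginv : (C g * C g⁻¹ : K⟦X⟧) = 1 := by rw [← map_mul, mul_inv_cancel₀ hg, map_one]
  have hb : (C (backlundSnd D f g) : K⟦X⟧) =
      C f * C g ^ 2 + C (D (D g)) - C (D g) ^ 2 * C g⁻¹ := by
    simp only [backlundSnd, div_eq_mul_inv, map_sub, map_add, map_mul, map_pow]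
  rw [← sub_eq_zero]
  apply eq_zero_of_eq_X_mul_derivation (D := D)
    (H := X * (C f * F + C g⁻¹ * G) - C (D g) * C g⁻¹)
  have hDE : coeffDerivation D (F * (C g - X * C (D g) - X ^ 2 * G) - C (g ^ 2)) =
      coeffDerivation D F * (C g - X * C (D g) - X ^ 2 * G) +
        F * (C (D g) - X * C (D (D g)) - X ^ 2 * coeffDerivation D G) -
        2 * C g * C (D g) := by
    simp only [map_sub, map_pow, Derivation.leibniz, Derivation.leibniz_pow, coeffDerivation_C,
      coeffDerivation_X, smul_eq_mul, nsmul_eq_mul, mul_zero, add_zero]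
    push_cast
    ring
  rw [hDE, map_pow]
  linear_combination (C g - X * C (D g) - X ^ 2 * G) * hF - X ^ 2 * F * hG - X ^ 2 * F * hb +
    (F - C g) * (X * C (D g)) * hginv - (F - C g) * X ^ 2 * G * hginv

lemma hankelDet_riccatiSeq_succ (hg : g ≠ 0) (n : ℕ) :
    hankelDet (riccatiSeq D f g) (n + 1) =
      g * hankelDet (riccatiSeq D g⁻¹ (backlundSnd D f g)) n := by
  set a := riccatiSeq D f g with ha
  set b := riccatiSeq D g⁻¹ (backlundSnd D f g) with hb
  have hrec (m : ℕ) : a (m + 1) =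
      g⁻¹ * D g * a m + ∑ k ∈ Finset.range m, g⁻¹ * b (m - 1 - k) * a k := by
    have h := congrArg (coeff (m + 1)) (mk_riccatiSeq_mul_eq_C_sq D f hg)
    rw [← ha, ← hb, show mk a * (C g - X * C (D g) - X ^ 2 * mk b) =
      C g * mk a - C (D g) * (X * mk a) - X ^ 2 * (mk a * mk b) by ring] at h
    simp only [map_sub, coeff_C_mul, coeff_succ_X_mul, coeff_succ_X_sq_mul_mul, coeff_mk, coeff_C,
      m.succ_ne_zero, if_false] at h
    simp only [mul_assoc, ← Finset.mul_sum, mul_comm (b _)]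
    field_simp
    linear_combination h
  rw [hankelDet_succ_of_recurrence (s := fun k => g⁻¹ * b k) hrec, hankelDet_const_mul, ha,
    riccatiSeq_zero, ← mul_assoc, pow_succ', mul_assoc g, ← mul_pow, mul_inv_cancel₀ hg, one_pow,
    mul_one]

end BacklundStep

section Hirota

variable {A R : Type*} [CommRing A] [CommRing R] [Algebra A R] (D : Derivation A R R)

/-- The Hirota derivative `D F · G` of first order. -/
def hirotaOne (F G : R) : R := D F * G - F * D G

/-- The Hirota derivative `D² F · G` of second order. -/
def hirotaTwo (F G : R) : R := D (D F) * G - 2 * D F * D G + F * D (D G)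

/-- The Hirota derivative `D³ F · G` of third order. -/
def hirotaThree (F G : R) : R :=
  D (D (D F)) * G - 3 * D (D F) * D G + 3 * D F * D (D G) - F * D (D (D G))

lemma hirotaOne_mul_mul (g F G : R) :
    hirotaOne D (g * F) (g * G) = g ^ 2 * hirotaOne D F G := by
  simp only [hirotaOne, D.leibniz, smul_eq_mul]
  ring

lemma hirotaTwo_mul_mul (g F G : R) :
    hirotaTwo D (g * F) (g * G) = g ^ 2 * hirotaTwo D F G + hirotaTwo D g g * (F * G) := by
  simp only [hirotaTwo, D.leibniz, smul_eq_mul, map_add]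
  ring

lemma hirotaThree_mul_mul (g F G : R) :
    hirotaThree D (g * F) (g * G) =
      g ^ 2 * hirotaThree D F G + 3 * hirotaTwo D g g * hirotaOne D F G := by
  simp only [hirotaThree, hirotaTwo, hirotaOne, D.leibniz, smul_eq_mul, map_add]
  ring

/-- The bilinear form of the second Painlevé equation for `(log (F / G))'`, with independent
variable `z`, in terms of tau functions `F` and `G`; `w` stands for `2 z - u' - u²`. -/
structure IsBilinearPainleveII (z w κ F G : R) : Prop where
  two : hirotaTwo D F G = (2 * z - w) * (F * G)
  three : hirotaThree D F G + (3 * w - 2 * z) * hirotaOne D F G = κ * (F * G)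

variable {D}

lemma IsBilinearPainleveII.gauge {z w w' κ F G g : R} (h : IsBilinearPainleveII D z w κ F G)
    (hg : hirotaTwo D g g = (w - w') * g ^ 2) :
    IsBilinearPainleveII D z w' κ (g * F) (g * G) where
  two := by
    rw [hirotaTwo_mul_mul, hg]
    linear_combination g ^ 2 * h.two
  three := by
    rw [hirotaThree_mul_mul, hirotaOne_mul_mul, hg]
    linear_combination g ^ 2 * h.three

variable (D) in
/-- The symmetric coupled system `f'' = 2 (z - f g) f`, `g'' = 2 (z - f g) g` satisfied by
`f = φ₀` and `g = ψ₀`. -/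
structure IsCoupledPair (z f g : R) : Prop where
  left : D (D f) = 2 * (z - f * g) * f
  right : D (D g) = 2 * (z - f * g) * g

lemma IsCoupledPair.isBilinearPainleveII {z f g : R} (hz : D z = 1) (h : IsCoupledPair D z f g) :
    IsBilinearPainleveII D z (2 * (f * g)) (2 * hirotaOne D g f + 2) g 1 where
  two := by
    simp only [hirotaTwo, D.map_one_eq_zero, map_zero, h.right]
    ring
  three := by
    have h2 : D (2 : R) = 0 := mod_cast D.map_natCast 2
    simp only [hirotaThree, hirotaOne, D.map_one_eq_zero, map_zero, h.right, D.leibniz, map_sub,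
      hz, h2, smul_eq_mul]
    ring

end Hirota

section Backlund

variable {A K : Type*} [CommRing A] [Field K] [Algebra A K] {D : Derivation A K K} {z f g : K}

lemma hirotaTwo_self (hg : g ≠ 0) :
    hirotaTwo D g g = (2 * (g⁻¹ * backlundSnd D f g) - 2 * (f * g)) * g ^ 2 := by
  simp only [hirotaTwo, backlundSnd]
  field_simp
  ring

lemma IsCoupledPair.backlundSnd_eq (h : IsCoupledPair D z f g) :
    backlundSnd D f g = 2 * z * g - f * g ^ 2 - D g ^ 2 / g := by
  rw [backlundSnd, h.right]
  ring

lemma IsCoupledPair.derivation_backlundSnd (hz : D z = 1) (h : IsCoupledPair D z f g)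
    (hg : g ≠ 0) :
    D (backlundSnd D f g) =
      2 * g - 2 * z * D g - D f * g ^ 2 + 2 * f * g * D g + D g ^ 3 / g ^ 2 := by
  have h2 : D (2 : K) = 0 := mod_cast D.map_natCast 2
  rw [h.backlundSnd_eq]
  simp only [map_sub, D.leibniz, D.leibniz_div, D.leibniz_pow, hz, h2, h.right, smul_eq_mul,
    nsmul_eq_mul]
  field_simp
  push_cast
  ring

lemma IsCoupledPair.backlund (hz : D z = 1) (h : IsCoupledPair D z f g) (hg : g ≠ 0) :
    IsCoupledPair D z g⁻¹ (backlundSnd D f g) where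
  left := by
    rw [h.backlundSnd_eq, D.leibniz_inv]
    simp only [D.leibniz, D.leibniz_pow, D.leibniz_inv, map_neg, h.right, smul_eq_mul, nsmul_eq_mul,
      Nat.cast_ofNat, Nat.reduceSub, pow_one]
    field_simp
    ring
  right := by
    have h2 : D (2 : K) = 0 := mod_cast D.map_natCast 2
    rw [h.derivation_backlundSnd hz hg, h.backlundSnd_eq]
    simp only [map_sub, map_add, D.leibniz, D.leibniz_div, D.leibniz_pow, hz, h2, h.left, h.right,
      smul_eq_mul, nsmul_eq_mul]
    field_simp
    push_cast
    ring

lemma IsCoupledPair.hirotaOne_backlund (hz : D z = 1) (h : IsCoupledPair D z f g) (hg : g ≠ 0) :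
    hirotaOne D (backlundSnd D f g) g⁻¹ = hirotaOne D g f + 2 := by
  rw [hirotaOne, hirotaOne, h.derivation_backlundSnd hz hg, h.backlundSnd_eq, D.leibniz_inv,
    smul_eq_mul]
  field_simp
  ring

theorem IsCoupledPair.isBilinearPainleveII_hankelDet_of_ne_zero (hz : D z = 1)
    (h : IsCoupledPair D z f g) (hW : ∀ k : ℕ, hirotaOne D g f + 2 * k ≠ 0) (n : ℕ) :
    IsBilinearPainleveII D z (2 * (f * g)) (2 * hirotaOne D g f + 4 * n + 2)
      (hankelDet (riccatiSeq D f g) (n + 1)) (hankelDet (riccatiSeq D f g) n) := by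
  induction n generalizing f g with
  | zero => simpa [riccatiSeq_zero] using h.isBilinearPainleveII hz
  | succ n ih =>
    have hg : g ≠ 0 := by
      rintro rfl
      simpa [hirotaOne] using hW 0
    have hW' := h.hirotaOne_backlund hz hg
    have ih := ih (h.backlund hz hg) fun k => by
      convert hW (k + 1) using 1
      rw [hW']
      push_cast
      ring
    rw [hankelDet_riccatiSeq_succ D f hg, hankelDet_riccatiSeq_succ D f hg]
    convert ih.gauge (hirotaTwo_self hg) using 1
    rw [hW']
    push_cast
    ring

end Backlund

section Specialization

variable {A R S : Type*} [CommRing A] [CommRing R] [CommRing S] [Algebra A R] [Algebra A S]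
  {D : Derivation A R R} {D' : Derivation A S S} {σ : R →+* S}

lemma map_riccatiSeq (hσ : ∀ a, D' (σ a) = σ (D a)) (f g : R) (n : ℕ) :
    σ (riccatiSeq D f g n) = riccatiSeq D' (σ f) (σ g) n := by
  induction n using Nat.strong_induction_on with
  | _ n ih =>
    rcases n with _ | n
    · rw [riccatiSeq_zero, riccatiSeq_zero]
    · simp only [riccatiSeq_succ, map_add, map_mul, map_sum, ← hσ, ih n n.lt_succ_self]
      congr 2
      refine Finset.sum_congr rfl fun k hk => ?_
      have := Finset.mem_range.1 hk
      rw [ih k (by omega), ih (n - 1 - k) (by omega)]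

lemma map_hirotaOne (hσ : ∀ a, D' (σ a) = σ (D a)) (F G : R) :
    σ (hirotaOne D F G) = hirotaOne D' (σ F) (σ G) := by
  simp only [hirotaOne, map_sub, map_mul, hσ]

lemma IsBilinearPainleveII.of_map (hσ : ∀ a, D' (σ a) = σ (D a)) (hinj : Function.Injective σ)
    {z w κ F G : R} (h : IsBilinearPainleveII D' (σ z) (σ w) (σ κ) (σ F) (σ G)) :
    IsBilinearPainleveII D z w κ F G where
  two := hinj <| by simpa [hirotaTwo, hσ, map_ofNat] using h.two
  three := hinj <| by simpa [hirotaThree, hirotaOne, hσ, map_ofNat] using h.three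

lemma exists_derivation_extension [Algebra R S] [IsScalarTower A R S] [Algebra.FormallyEtale R S]
    (D : Derivation A R R) :
    ∃ D' : Derivation A S S, ∀ a, D' (algebraMap R S a) = algebraMap R S (D a) := by
  have hS := KaehlerDifferential.isBaseChange_of_formallyEtale A R S
  refine ⟨(hS.lift (Algebra.linearMap R S ∘ₗ D.liftKaehlerDifferential)).compDer
    (KaehlerDifferential.D A S), fun a => ?_⟩
  simpa using hS.lift_eq (Algebra.linearMap R S ∘ₗ D.liftKaehlerDifferential)
    (KaehlerDifferential.D A R a)

theorem IsCoupledPair.isBilinearPainleveII_hankelDet_of_isDomain [IsDomain R] {z f g : R}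
    (hz : D z = 1) (h : IsCoupledPair D z f g) (hW : ∀ k : ℕ, hirotaOne D g f + 2 * k ≠ 0)
    (n : ℕ) :
    IsBilinearPainleveII D z (2 * (f * g)) (2 * hirotaOne D g f + 4 * n + 2)
      (hankelDet (riccatiSeq D f g) (n + 1)) (hankelDet (riccatiSeq D f g) n) := by
  obtain ⟨D', hD'⟩ := exists_derivation_extension (S := FractionRing R) D
  have hinj := IsFractionRing.injective R (FractionRing R)
  refine .of_map hD' hinj ?_
  set σ := algebraMap R (FractionRing R)
  have h' : IsCoupledPair D' (σ z) (σ f) (σ g) :=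
    ⟨by simp [hD', h.left, map_ofNat], by simp [hD', h.right, map_ofNat]⟩
  have hW' (k : ℕ) : hirotaOne D' (σ g) (σ f) + 2 * k ≠ 0 := by
    rw [← map_hirotaOne hD']
    simpa [map_ofNat] using (map_ne_zero_iff σ hinj).2 (hW k)
  have key := h'.isBilinearPainleveII_hankelDet_of_ne_zero (by rw [hD', hz, map_one]) hW' n
  simpa [map_hankelDet, map_riccatiSeq hD', map_hirotaOne hD', map_ofNat] using key

end Specialization

section Universal

open MvPolynomial

/-- The coordinates of the phase space of the coupled system. -/
inductive CoupledVar
  | time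
  | f
  | df
  | g
  | dg

/-- The vector field of the coupled system. -/
noncomputable def coupledField : CoupledVar → MvPolynomial CoupledVar ℝ
  | .time => 1
  | .f => X .df
  | .df => 2 * (X .time - X .f * X .g) * X .f
  | .g => X .dg
  | .dg => 2 * (X .time - X .f * X .g) * X .g

/-- Differentiation along the solutions of the coupled system. -/
noncomputable abbrev coupledDerivation :
    Derivation ℝ (MvPolynomial CoupledVar ℝ) (MvPolynomial CoupledVar ℝ) :=
  mkDerivation ℝ coupledField

lemma isCoupledPair_X : IsCoupledPair coupledDerivation (X .time) (X .f) (X .g) :=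
  ⟨by simp [mkDerivation_X, coupledField], by simp [mkDerivation_X, coupledField]⟩

/-- The determinants `τ_n`, `n ≥ 0`, as polynomials in the coordinates of phase space. -/
noncomputable def universalTau (n : ℕ) : MvPolynomial CoupledVar ℝ :=
  hankelDet (riccatiSeq coupledDerivation (X .f) (X .g)) n

theorem isBilinearPainleveII_universalTau (n : ℕ) :
    IsBilinearPainleveII coupledDerivation (X .time) (2 * (X .f * X .g))
      (2 * (X .dg * X .f - X .g * X .df : MvPolynomial CoupledVar ℝ) + 4 * n + 2)
      (universalTau (n + 1)) (universalTau n) := by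
  have hz : coupledDerivation (X .time) = 1 := by simp [mkDerivation_X, coupledField]
  have hW : hirotaOne coupledDerivation (X .g) (X .f) = X .dg * X .f - X .g * X .df := by
    simp [hirotaOne, mkDerivation_X, coupledField]
  rw [← hW]
  refine isCoupledPair_X.isBilinearPainleveII_hankelDet_of_isDomain hz (fun k hk => ?_) n
  have heval : (1 + 2 * k : ℝ) = 0 := by
    simpa [hW] using congrArg (eval fun | .f => 1 | .dg => 1 | _ => 0) hk
  exact absurd heval (by positivity)

end Universal

section Evaluation

open MvPolynomial

lemma hasDerivAt_eval {σ 𝕜 : Type*} [NontriviallyNormedField 𝕜] {c : 𝕜 → σ → 𝕜}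
    {d : σ → MvPolynomial σ 𝕜} {z : 𝕜} (h : ∀ i, HasDerivAt (fun t => c t i) (eval (c z) (d i)) z)
    (p : MvPolynomial σ 𝕜) :
    HasDerivAt (fun t => eval (c t) p) (eval (c z) (mkDerivation 𝕜 d p)) z := by
  induction p using MvPolynomial.induction_on with
  | C r => simpa using hasDerivAt_const z r
  | add p q hp hq => simpa using hp.fun_add hq
  | mul_X p i hp =>
    simp only [Derivation.leibniz, mkDerivation_X, map_add, map_mul, smul_eq_mul, eval_X]
    exact (hp.fun_mul (h i)).congr_deriv (by ring)

/-- `f` and `g`, with derivatives `f'` and `g'`, solve the coupled system on `I` and have constant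
Wronskian `g' f - g f' = 2 α`. -/
structure IsCoupledSolution (I : Set ℝ) (α : ℝ) (f f' g g' : ℝ → ℝ) : Prop where
  left : ∀ z ∈ I, HasDerivAt f (f' z) z
  left' : ∀ z ∈ I, HasDerivAt f' (2 * (z - f z * g z) * f z) z
  right : ∀ z ∈ I, HasDerivAt g (g' z) z
  right' : ∀ z ∈ I, HasDerivAt g' (2 * (z - f z * g z) * g z) z
  wronskian : ∀ z ∈ I, g' z * f z - g z * f' z = 2 * α

/-- The recursion of `riccatiSeq`, for functions on `I`. -/
structure IsRiccatiSeqOn (I : Set ℝ) (f g : ℝ → ℝ) (a : ℕ → ℝ → ℝ) : Prop where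
  zero : ∀ z ∈ I, a 0 z = g z
  succ : ∀ n, ∀ z ∈ I, a (n + 1) z =
    deriv (a n) z + f z * ∑ k ∈ Finset.range n, a k z * a (n - 1 - k) z

variable {I : Set ℝ} {α : ℝ} {f f' g g' : ℝ → ℝ} {a : ℕ → ℝ → ℝ}

/-- The trajectory in phase space of a solution of the coupled system. -/
def trajectory (f f' g g' : ℝ → ℝ) (z : ℝ) : CoupledVar → ℝ
  | .time => z
  | .f => f z
  | .df => f' z
  | .g => g z
  | .dg => g' z

lemma IsCoupledSolution.symm (h : IsCoupledSolution I α f f' g g') :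
    IsCoupledSolution I (-α) g g' f f' where
  left := h.right
  left' z hz := by simpa only [mul_comm] using h.right' z hz
  right := h.left
  right' z hz := by simpa only [mul_comm] using h.left' z hz
  wronskian z hz := by linear_combination -h.wronskian z hz

lemma IsCoupledSolution.hasDerivAt_eval_trajectory (h : IsCoupledSolution I α f f' g g') {z : ℝ}
    (hz : z ∈ I) (p : MvPolynomial CoupledVar ℝ) :
    HasDerivAt (fun t => eval (trajectory f f' g g' t) p)
      (eval (trajectory f f' g g' z) (coupledDerivation p)) z := by
  refine hasDerivAt_eval (fun i => ?_) p
  cases i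
  · simpa [trajectory, coupledField] using hasDerivAt_id' z
  · simpa [trajectory, coupledField] using h.left z hz
  · simpa [trajectory, coupledField] using h.left' z hz
  · simpa [trajectory, coupledField] using h.right z hz
  · simpa [trajectory, coupledField] using h.right' z hz

lemma IsRiccatiSeqOn.eq_eval (ha : IsRiccatiSeqOn I f g a) (hI : IsOpen I)
    (h : IsCoupledSolution I α f f' g g') (n : ℕ) : ∀ z ∈ I,
      a n z = eval (trajectory f f' g g' z) (riccatiSeq coupledDerivation (X .f) (X .g) n) := by
  induction n using Nat.strong_induction_on with
  | _ n ih =>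
    intro z hz
    rcases n with _ | n
    · simp [ha.zero z hz, riccatiSeq_zero, trajectory]
    have hderiv := ((h.hasDerivAt_eval_trajectory hz _).congr_of_eventuallyEq
      (Filter.eventually_of_mem (hI.mem_nhds hz) (ih n n.lt_succ_self))).deriv
    simp only [ha.succ n z hz, hderiv, riccatiSeq_succ, map_add, map_mul, map_sum, eval_X]
    congr 2
    refine Finset.sum_congr rfl fun k hk => ?_
    have := Finset.mem_range.1 hk
    rw [ih k (by omega) z hz, ih (n - 1 - k) (by omega) z hz]

lemma IsRiccatiSeqOn.hankelDet_eq_eval (ha : IsRiccatiSeqOn I f g a) (hI : IsOpen I)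
    (h : IsCoupledSolution I α f f' g g') (n : ℕ) {z : ℝ} (hz : z ∈ I) :
    hankelDet (fun k => a k z) n = eval (trajectory f f' g g' z) (universalTau n) := by
  simp only [ha.eq_eval hI h _ z hz]
  exact (map_hankelDet (eval (trajectory f f' g g' z)) _ n).symm

end Evaluation

section Painleve

variable {I : Set ℝ} {α : ℝ}

/-- `u` solves P_II[α] on `I`; differentiability of `u` and `u'` is part of the definition. -/
def IsPainleve2Solution (I : Set ℝ) (α : ℝ) (u : ℝ → ℝ) : Prop :=
  ∃ u' : ℝ → ℝ, ∀ z ∈ I, HasDerivAt u (u' z) z ∧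
    HasDerivAt u' (2 * u z ^ 3 - 4 * z * u z + 4 * (α + 1 / 2)) z

lemma IsPainleve2Solution.deriv_deriv {u : ℝ → ℝ} (h : IsPainleve2Solution I α u) (hI : IsOpen I)
    {z : ℝ} (hz : z ∈ I) :
    deriv (deriv u) z = 2 * u z ^ 3 - 4 * z * u z + 4 * (α + 1 / 2) := by
  obtain ⟨u', hu'⟩ := h
  rw [Filter.EventuallyEq.deriv_eq (Filter.eventually_of_mem (hI.mem_nhds hz)
    fun t ht => (hu' t ht).1.deriv), (hu' z hz).2.deriv]

lemma IsPainleve2Solution.neg {u : ℝ → ℝ} (h : IsPainleve2Solution I α u) :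
    IsPainleve2Solution I (-α - 1) (-u) := by
  obtain ⟨u', hu'⟩ := h
  refine ⟨-u', fun z hz => ⟨(hu' z hz).1.neg, (hu' z hz).2.neg.congr_deriv ?_⟩⟩
  simp only [Pi.neg_apply]
  ring

lemma IsPainleve2Solution.congr {u v : ℝ → ℝ} (h : IsPainleve2Solution I α u) (hI : IsOpen I)
    (huv : Set.EqOn v u I) : IsPainleve2Solution I α v := by
  obtain ⟨u', hu'⟩ := h
  refine ⟨u', fun z hz => ⟨(hu' z hz).1.congr_of_eventuallyEq
    (Filter.eventually_of_mem (hI.mem_nhds hz) huv), ?_⟩⟩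
  rw [huv hz]
  exact (hu' z hz).2

lemma hasDerivAt_div_zero {F : ℕ → ℝ → ℝ} {z : ℝ} (hF : ∀ n, HasDerivAt (F n) (F (n + 1) z) z)
    (hF0 : F 0 z ≠ 0) (n : ℕ) :
    HasDerivAt (fun t => F n t / F 0 t)
      (F (n + 1) z / F 0 z - F n z / F 0 z * (F 1 z / F 0 z)) z :=
  ((hF n).fun_div (hF 0) hF0).congr_deriv (by field_simp)

lemma isPainleve2Solution_of_bilinear (hI : IsOpen I) {F G : ℕ → ℝ → ℝ} {w : ℝ → ℝ}
    (hF : ∀ z ∈ I, ∀ n, HasDerivAt (F n) (F (n + 1) z) z)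
    (hG : ∀ z ∈ I, ∀ n, HasDerivAt (G n) (G (n + 1) z) z)
    (hF0 : ∀ z ∈ I, F 0 z ≠ 0) (hG0 : ∀ z ∈ I, G 0 z ≠ 0)
    (htwo : ∀ z ∈ I, F 2 z * G 0 z - 2 * F 1 z * G 1 z + F 0 z * G 2 z =
      (2 * z - w z) * (F 0 z * G 0 z))
    (hthree : ∀ z ∈ I,
      F 3 z * G 0 z - 3 * F 2 z * G 1 z + 3 * F 1 z * G 2 z - F 0 z * G 3 z +
        (3 * w z - 2 * z) * (F 1 z * G 0 z - F 0 z * G 1 z) =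
      4 * (α + 1 / 2) * (F 0 z * G 0 z)) :
    IsPainleve2Solution I α (logDeriv (F 0) - logDeriv (G 0)) := by
  have hsol : IsPainleve2Solution I α fun z => F 1 z / F 0 z - G 1 z / G 0 z := by
    refine ⟨fun z => F 2 z / F 0 z - F 1 z / F 0 z * (F 1 z / F 0 z) -
      (G 2 z / G 0 z - G 1 z / G 0 z * (G 1 z / G 0 z)), fun z hz => ?_⟩
    have hf := hasDerivAt_div_zero (hF z hz) (hF0 z hz)
    have hg := hasDerivAt_div_zero (hG z hz) (hG0 z hz)
    refine ⟨(hf 1).sub (hg 1), (((hf 2).sub ((hf 1).mul (hf 1))).sub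
      ((hg 2).sub ((hg 1).mul (hg 1)))).congr_deriv ?_⟩
    have hF0z := hF0 z hz
    have hG0z := hG0 z hz
    have h2 : F 2 z / F 0 z - 2 * (F 1 z / F 0 z) * (G 1 z / G 0 z) + G 2 z / G 0 z =
        2 * z - w z := by
      field_simp
      linear_combination htwo z hz
    have h3 : F 3 z / F 0 z - 3 * (F 2 z / F 0 z) * (G 1 z / G 0 z) +
        3 * (F 1 z / F 0 z) * (G 2 z / G 0 z) - G 3 z / G 0 z +
        (3 * w z - 2 * z) * (F 1 z / F 0 z - G 1 z / G 0 z) = 4 * (α + 1 / 2) := by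
      field_simp
      linear_combination 2 * hthree z hz
    linear_combination h3 - 3 * (F 1 z / F 0 z - G 1 z / G 0 z) * h2
  refine hsol.congr hI fun z hz => ?_
  simp only [Pi.sub_apply, logDeriv_apply, (hF z hz 0).deriv, (hG z hz 0).deriv, zero_add]

lemma isCoupledSolution_of_painleve2 {u u' ψ0 : ℝ → ℝ} (hu : ∀ z ∈ I, HasDerivAt u (u' z) z)
    (hu' : ∀ z ∈ I, HasDerivAt u' (2 * u z ^ 3 - 4 * z * u z + 4 * (α + 1 / 2)) z)
    (hψ0 : ∀ z ∈ I, HasDerivAt ψ0 (u z * ψ0 z) z) (hψ0_ne : ∀ z ∈ I, ψ0 z ≠ 0) :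
    IsCoupledSolution I α (fun z => (-u' z - u z ^ 2 + 2 * z) / (2 * ψ0 z))
      (fun z => (u z * (-u' z - u z ^ 2 + 2 * z) - 4 * α) / (2 * ψ0 z)) ψ0
      (fun z => u z * ψ0 z) where
  left z hz := by
    have hne := hψ0_ne z hz
    have hnum := ((hu' z hz).neg.sub ((hu z hz).pow 2)).add ((hasDerivAt_id z).const_mul 2)
    refine (hnum.div ((hψ0 z hz).const_mul 2) (by simpa using hne)).congr_deriv ?_
    simp only [Pi.add_apply, Pi.sub_apply, Pi.neg_apply, Pi.pow_apply, id]
    field_simp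
    ring
  left' z hz := by
    have hne := hψ0_ne z hz
    have hnum := ((hu' z hz).neg.sub ((hu z hz).pow 2)).add ((hasDerivAt_id z).const_mul 2)
    refine ((((hu z hz).mul hnum).sub_const (4 * α)).div ((hψ0 z hz).const_mul 2)
      (by simpa using hne)).congr_deriv ?_
    simp only [Pi.add_apply, Pi.sub_apply, Pi.neg_apply, Pi.pow_apply, Pi.mul_apply, id]
    field_simp
    ring
  right := hψ0
  right' z hz := by
    have hne := hψ0_ne z hz
    refine ((hu z hz).mul (hψ0 z hz)).congr_deriv ?_
    field_simp
    ring
  wronskian z hz := by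
    have hne := hψ0_ne z hz
    field_simp
    ring

lemma isCoupledSolution_of_contDiffOn (hI : IsOpen I) {u ψ0 : ℝ → ℝ} (hu : ContDiffOn ℝ 2 u I)
    (hu_P2 : ∀ z ∈ I, deriv (deriv u) z = 2 * u z ^ 3 - 4 * z * u z + 4 * (α + 1 / 2))
    (hψ0 : DifferentiableOn ℝ ψ0 I) (hψ0_lin : ∀ z ∈ I, deriv ψ0 z = u z * ψ0 z)
    (hψ0_ne : ∀ z ∈ I, ψ0 z ≠ 0) :
    IsCoupledSolution I α (fun z => (-deriv u z - u z ^ 2 + 2 * z) / (2 * ψ0 z))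
      (fun z => (u z * (-deriv u z - u z ^ 2 + 2 * z) - 4 * α) / (2 * ψ0 z)) ψ0
      (fun z => u z * ψ0 z) := by
  have hu' : ContDiffOn ℝ 1 (deriv u) I := hu.deriv_of_isOpen hI (by norm_num)
  refine isCoupledSolution_of_painleve2 (fun z hz => ?_) (fun z hz => ?_) (fun z hz => ?_) hψ0_ne
  · exact (hu.differentiableOn (by simp)).hasDerivAt (hI.mem_nhds hz)
  · rw [← hu_P2 z hz]
    exact (hu'.differentiableOn (by simp)).hasDerivAt (hI.mem_nhds hz)
  · rw [← hψ0_lin z hz]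
    exact hψ0.hasDerivAt (hI.mem_nhds hz)

open MvPolynomial in
theorem IsCoupledSolution.isPainleve2Solution_hankelDet {f f' g g' : ℝ → ℝ} {a : ℕ → ℝ → ℝ}
    (h : IsCoupledSolution I α f f' g g') (hI : IsOpen I) (ha : IsRiccatiSeqOn I f g a) (n : ℕ)
    (hn : ∀ z ∈ I, hankelDet (fun k => a k z) n ≠ 0)
    (hn1 : ∀ z ∈ I, hankelDet (fun k => a k z) (n + 1) ≠ 0) :
    IsPainleve2Solution I (α + n) (logDeriv (fun z => hankelDet (fun k => a k z) (n + 1)) -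
      logDeriv fun z => hankelDet (fun k => a k z) n) := by
  let F (m i : ℕ) (z : ℝ) : ℝ :=
    eval (trajectory f f' g g' z) (coupledDerivation^[i] (universalTau m))
  have hF (m : ℕ) (z : ℝ) (hz : z ∈ I) (i : ℕ) : HasDerivAt (F m i) (F m (i + 1) z) z := by
    simpa only [F, Function.iterate_succ_apply'] using h.hasDerivAt_eval_trajectory hz _
  have hτ (m : ℕ) : Set.EqOn (fun z => hankelDet (fun k => a k z) m) (F m 0) I :=
    fun z hz => ha.hankelDet_eq_eval hI h m hz
  have hlog (m : ℕ) : Set.EqOn (logDeriv fun z => hankelDet (fun k => a k z) m)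
      (logDeriv (F m 0)) I := fun z hz => by
    have heq := Filter.eventuallyEq_of_mem (hI.mem_nhds hz) (hτ m)
    simp only [logDeriv_apply, heq.deriv_eq, heq.eq_of_nhds]
  have hbil := isBilinearPainleveII_universalTau n
  suffices hsol : IsPainleve2Solution I (α + n) (logDeriv (F (n + 1) 0) - logDeriv (F n 0)) from
    hsol.congr hI fun z hz => congrArg₂ (· - ·) (hlog (n + 1) hz) (hlog n hz)
  refine isPainleve2Solution_of_bilinear hI (w := fun z => 2 * (f z * g z)) (hF (n + 1)) (hF n)
    (fun z hz => hτ (n + 1) hz ▸ hn1 z hz) (fun z hz => hτ n hz ▸ hn z hz)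
    (fun z _ => ?_) fun z hz => ?_
  · simpa [hirotaTwo, F, trajectory] using congrArg (eval (trajectory f f' g g' z)) hbil.two
  · have hthree := congrArg (eval (trajectory f f' g g' z)) hbil.three
    simp only [hirotaThree, hirotaOne, map_add, map_sub, map_mul, map_ofNat, map_natCast, eval_X,
      trajectory, h.wronskian z hz] at hthree
    simp only [F, Function.iterate_succ_apply', Function.iterate_zero_apply]
    linear_combination hthree

lemma hankelTau_eq_hankelDet (ψ φ : ℕ → ℝ → ℝ) (N : ℤ) (z : ℝ) :
    hankelTau ψ φ N z = if 0 ≤ N then hankelDet (fun k => ψ k z) N.toNat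
      else hankelDet (fun k => φ k z) (-N).toNat :=
  rfl

lemma hankelTau_natCast (ψ φ : ℕ → ℝ → ℝ) (n : ℕ) :
    hankelTau ψ φ n = fun z => hankelDet (fun k => ψ k z) n := by
  funext z
  simp [hankelTau_eq_hankelDet]

lemma hankelTau_neg (ψ φ : ℕ → ℝ → ℝ) (N : ℤ) : hankelTau ψ φ (-N) = hankelTau φ ψ N := by
  funext z
  rcases lt_trichotomy N 0 with hN | rfl | hN
  · simp [hankelTau_eq_hankelDet, hN.le, not_le.2 hN]
  · simp [hankelTau_eq_hankelDet]
  · simp [hankelTau_eq_hankelDet, hN.le, not_le.2 hN]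

end Painleve

end PainleveII

open PainleveII

-- In terms of the pair `(f, g)` the formula also covers solutions for which `g = ψ₀` has zeros,
-- that is, `u = g' / g` has poles.
theorem painleve2_determinant_formula_general {I : Set ℝ} (hI : IsOpen I) {α : ℝ}
    {f f' g g' : ℝ → ℝ} (h : IsCoupledSolution I α f f' g g') {ψ φ : ℕ → ℝ → ℝ}
    (hψ : IsRiccatiSeqOn I f g ψ) (hφ : IsRiccatiSeqOn I g f φ) (N : ℤ)
    (hN : ∀ z ∈ I, hankelTau ψ φ N z ≠ 0) (hN1 : ∀ z ∈ I, hankelTau ψ φ (N + 1) z ≠ 0) :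
    IsPainleve2Solution I (α + N)
      (logDeriv (hankelTau ψ φ (N + 1)) - logDeriv (hankelTau ψ φ N)) := by
  obtain ⟨n, rfl | rfl⟩ : ∃ n : ℕ, N = n ∨ N = -(n + 1 : ℕ) := by
    rcases N with n | n
    · exact ⟨n, .inl rfl⟩
    · exact ⟨n, .inr rfl⟩
  · rw [← Nat.cast_succ] at hN1 ⊢
    simp only [hankelTau_natCast] at hN hN1 ⊢
    simpa using h.isPainleve2Solution_hankelDet hI hψ n hN hN1
  · have hsucc : -((n + 1 : ℕ) : ℤ) + 1 = -(n : ℤ) := by push_cast; ring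
    simp only [hsucc, hankelTau_neg, hankelTau_natCast] at hN hN1 ⊢
    convert (h.symm.isPainleve2Solution_hankelDet hI hφ n hN1 hN).neg using 1
    · push_cast; ring
    · rw [neg_sub]

/-- If `u` solves P_II[α] on `I`, `ψ0` is nowhere vanishing with `ψ0' = u ψ0`, and
`w = -u' - u² + 2z`, then for every integer `N` with `τ_N`, `τ_{N+1}` nowhere zero on `I`,
the function `U = (log (τ_{N+1}/τ_N))'` solves P_II[α + N] on `I`. -/
theorem painleve2_determinant_formula
    (I : Set ℝ) (hIopen : IsOpen I) (hIconn : I.OrdConnected)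
    (α : ℝ) (u ψ0 : ℝ → ℝ)
    (hu_smooth : ContDiffOn ℝ (⊤ : ℕ∞) u I)
    (hu_P2 : ∀ z ∈ I,
      deriv (deriv u) z = 2 * (u z) ^ 3 - 4 * z * u z + 4 * (α + 1 / 2))
    (hψ0_smooth : ContDiffOn ℝ (⊤ : ℕ∞) ψ0 I)
    (hψ0_ne : ∀ z ∈ I, ψ0 z ≠ 0)
    (hψ0_lin : ∀ z ∈ I, deriv ψ0 z = u z * ψ0 z)
    (w : ℝ → ℝ)
    (hw : w = fun z => -deriv u z - (u z) ^ 2 + 2 * z)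
    (ψ φ : ℕ → ℝ → ℝ)
    (hψ_zero : ψ 0 = ψ0)
    (hφ_zero : ∀ z ∈ I, φ 0 z = w z / (2 * ψ0 z))
    (hψ_rec : ∀ n : ℕ, ∀ z ∈ I, ψ (n + 1) z =
      deriv (ψ n) z + (w z / (2 * ψ0 z)) *
        ∑ k ∈ Finset.range n, ψ k z * ψ (n - 1 - k) z)
    (hφ_rec : ∀ n : ℕ, ∀ z ∈ I, φ (n + 1) z =
      deriv (φ n) z + ψ0 z *
        ∑ k ∈ Finset.range n, φ k z * φ (n - 1 - k) z)
    (N : ℤ)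
    (hτN_ne : ∀ z ∈ I, hankelTau ψ φ N z ≠ 0)
    (hτN1_ne : ∀ z ∈ I, hankelTau ψ φ (N + 1) z ≠ 0)
    (U : ℝ → ℝ)
    (hU : U = fun z => deriv (hankelTau ψ φ (N + 1)) z / hankelTau ψ φ (N + 1) z
      - deriv (hankelTau ψ φ N) z / hankelTau ψ φ N z) :
    ∀ z ∈ I,
      deriv (deriv U) z = 2 * (U z) ^ 3 - 4 * z * U z + 4 * (α + (N : ℝ) + 1 / 2) := by
  subst hw hU
  intro z hz
  have hpair := isCoupledSolution_of_contDiffOn hIopen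
    (hu_smooth.of_le (WithTop.coe_le_coe.2 le_top)) hu_P2
    (hψ0_smooth.differentiableOn (by simp)) hψ0_lin hψ0_ne
  have hsol := painleve2_determinant_formula_general hIopen hpair
    ⟨fun z _ => congrFun hψ_zero z, hψ_rec⟩ ⟨hφ_zero, hφ_rec⟩ N hτN_ne hτN1_ne
  exact hsol.deriv_deriv hIopen hz
end

section
/- Let w be a smooth solution of P_XXXIV[α] on an open interval I ⊆ ℝ, and let ψ_0 be a nowhere-vanishing smooth function on I satisfying both (L1) and (L2) with this w and parameter α. Define the sequences ψ_n, φ_n and the Hankel determinants τ_N from w and ψ_0. Then for every integer N, the bilinear equation D_z³ τ_{N+1}·τ_N + (3w − 2z)·(D_z τ_{N+1}·τ_N) − 4(α + N + 1/2)·τ_{N+1}·τ_N = 0 holds identically on I. -/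
/-!
The recursion for `ψₙ` says that the generating series `F = ∑ ψₙ Xⁿ` solves the Riccati equation
`F = p + X F' + q X² F²`, where `p = ψ₀`, `q = φ₀` and `w = 2 p q`. Where `p` does not vanish, write
`F = p² / (p - p' X - X² H)`. One step of the Schur algorithm gives `τ_{N+1}(F) = p τ_N(H)`, and
`H` solves the Riccati equation with `(p, q)` replaced by `(r, 1 / p)`, where
`p r = p p'' - p'² + q p³`. This replacement is the Bäcklund transformation `α ↦ α + 1`, and it
changes `w` by exactly the amount by which the bilinear form changes when both of its arguments are
multiplied by `p`, so induction on `N` applies. Since `r` may vanish even when `p` does not, the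
induction allows zeros of `p`: on an open set where `p = 0` the recursion forces `F = 0`, and the
remaining points are reached by continuity. Negative `N` follow by exchanging `ψ` and `φ`, which
changes the sign of `α`.
-/

open PowerSeries Filter Topology
open scoped ContDiff

section Hankel

/-- The Hankel determinant `det (f_{i+j})_{0 ≤ i, j < N}` of the coefficients of
`F = ∑ fₙ Xⁿ`. -/
noncomputable def hankelDet {R : Type*} [CommRing R] (F : R⟦X⟧) (N : ℕ) : R :=
  Matrix.det (Matrix.of fun i j : Fin N => coeff ((i : ℕ) + (j : ℕ)) F)

variable {K : Type*} [Field K] {F : K⟦X⟧}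

theorem det_succ_eq_mul_det_schur {n : ℕ} (M : Matrix (Fin (n + 1)) (Fin (n + 1)) K)
    (h : M 0 0 ≠ 0) :
    M.det = M 0 0 * Matrix.det
      (Matrix.of fun i j : Fin n => M i.succ j.succ - M i.succ 0 * (M 0 0)⁻¹ * M 0 j.succ) := by
  let A : Matrix (Fin (n + 1)) (Fin (n + 1)) K :=
    Matrix.of <| Fin.cons (M 0) fun i j => M i.succ j - M i.succ 0 * (M 0 0)⁻¹ * M 0 j
  have hdet : M.det = A.det := by
    refine Matrix.det_eq_of_forall_row_eq_smul_add_const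
      (Fin.cons 0 fun i => M i.succ 0 * (M 0 0)⁻¹) 0 rfl fun i j => ?_
    cases i using Fin.cases <;> simp [A]
  have hA : ∀ i : Fin n, A i.succ 0 = 0 := fun i => by simp [A, h]
  rw [hdet, Matrix.det_succ_column_zero, Fin.sum_univ_succ]
  simp only [hA, mul_zero, zero_mul, Finset.sum_const_zero, add_zero]
  simp [A, Matrix.submatrix]

/-- The tail `H` of the continued fraction `F = f₀² / (f₀ - f₁ X - X² H)`. -/
noncomputable def jFractionTail (F : K⟦X⟧) : K⟦X⟧ :=
  PowerSeries.mk fun n => -constantCoeff F ^ 2 * coeff (n + 2) F⁻¹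

theorem X_sq_mul_jFractionTail (hF : constantCoeff F ≠ 0) :
    X ^ 2 * jFractionTail F
      = C (constantCoeff F) - C (coeff 1 F) * X - C (constantCoeff F ^ 2) * F⁻¹ := by
  have hinv : constantCoeff F ^ 2 * coeff 1 F⁻¹ = -coeff 1 F := by
    have h : coeff 1 (F * F⁻¹) = 0 := by
      rw [PowerSeries.mul_inv_cancel F hF, coeff_one, if_neg one_ne_zero]
    rw [coeff_one_mul, PowerSeries.constantCoeff_inv] at h
    linear_combination constantCoeff F * h - coeff 1 F * mul_inv_cancel₀ hF
  ext n
  rcases n with _ | _ | n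
  · simp [sq, hF, mul_assoc]
  · rw [map_sub, coeff_C_mul, hinv]
    simp [coeff_X_pow_mul', coeff_C]
  · rw [show n + 1 + 1 = n + 2 from rfl, coeff_X_pow_mul, map_sub, coeff_C_mul]
    simp [jFractionTail]

theorem coeff_jFractionTail_mul (hF : constantCoeff F ≠ 0) (n : ℕ) :
    coeff n (jFractionTail F * F)
      = constantCoeff F * coeff (n + 2) F - coeff 1 F * coeff (n + 1) F := by
  have h : X ^ 2 * (jFractionTail F * F)
      = C (constantCoeff F) * F - C (coeff 1 F) * (X * F) - C (constantCoeff F ^ 2) := by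
    linear_combination F * X_sq_mul_jFractionTail hF
      - C (constantCoeff F ^ 2) * PowerSeries.mul_inv_cancel F hF
  rw [← coeff_X_pow_mul _ 2, h, map_sub, map_sub, coeff_C_mul, coeff_C_mul, coeff_succ_X_mul,
    coeff_C, if_neg (by lia), sub_zero]

theorem constantCoeff_mul_jFractionTail (hF : constantCoeff F ≠ 0) :
    constantCoeff F * constantCoeff (jFractionTail F)
      = constantCoeff F * coeff 2 F - coeff 1 F ^ 2 := by
  have h := coeff_jFractionTail_mul hF 0
  simp only [coeff_zero_eq_constantCoeff, map_mul] at h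
  linear_combination h

theorem sum_coeff_mul_jFractionTail_mul_coeff (hF : constantCoeff F ≠ 0) (i j : ℕ) :
    ∑ a ∈ Finset.range (i + 1), ∑ c ∈ Finset.range (j + 1),
        coeff (i - a) F * coeff (a + c) (jFractionTail F) * coeff (j - c) F
      = constantCoeff F ^ 2 * coeff (i + j + 2) F
        - constantCoeff F * coeff (i + 1) F * coeff (j + 1) F := by
  set H := jFractionTail F
  have hconv (n : ℕ) : ∑ c ∈ Finset.range (n + 1), coeff c H * coeff (n - c) F
      = constantCoeff F * coeff (n + 2) F - coeff 1 F * coeff (n + 1) F := by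
    rw [← coeff_jFractionTail_mul hF, coeff_mul,
      Finset.Nat.sum_antidiagonal_eq_sum_range_succ_mk]
  induction i generalizing j with
  | zero =>
    simp only [zero_add, Finset.range_one, Finset.sum_singleton, Nat.sub_zero, mul_assoc,
      ← Finset.mul_sum, hconv, coeff_zero_eq_constantCoeff]
    ring
  | succ i ih =>
    -- both sums contain the shifted double sum `∑ f_{i-a} h_{a+c+1} f_{j-c}`
    have hrow : ∑ a ∈ Finset.range (i + 1), ∑ c ∈ Finset.range (j + 1 + 1),
          coeff (i - a) F * coeff (a + c) H * coeff (j + 1 - c) F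
        = ∑ a ∈ Finset.range (i + 1), ∑ c ∈ Finset.range (j + 1),
            coeff (i - a) F * coeff (a + c + 1) H * coeff (j - c) F
          + coeff (j + 1) F * ∑ a ∈ Finset.range (i + 1), coeff a H * coeff (i - a) F := by
      rw [Finset.mul_sum, ← Finset.sum_add_distrib]
      refine Finset.sum_congr rfl fun a _ => ?_
      rw [Finset.sum_range_succ']
      simp only [Nat.add_sub_add_right, Nat.sub_zero, add_zero, ← add_assoc]
      ring
    have hcol : ∑ a ∈ Finset.range (i + 1 + 1), ∑ c ∈ Finset.range (j + 1),
          coeff (i + 1 - a) F * coeff (a + c) H * coeff (j - c) F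
        = ∑ a ∈ Finset.range (i + 1), ∑ c ∈ Finset.range (j + 1),
            coeff (i - a) F * coeff (a + c + 1) H * coeff (j - c) F
          + coeff (i + 1) F * ∑ c ∈ Finset.range (j + 1), coeff c H * coeff (j - c) F := by
      rw [Finset.sum_range_succ', Finset.mul_sum]
      simp only [Nat.add_sub_add_right, Nat.sub_zero, zero_add, add_right_comm, mul_assoc]
    have := ih (j + 1)
    rw [hrow, hconv] at this
    rw [hcol, hconv, show i + 1 + j + 2 = i + (j + 1) + 2 by ring]
    linear_combination this

theorem sum_fin_ite_le {M : Type*} [AddCommMonoid M] {N : ℕ} (i : Fin N) (g : ℕ → M) :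
    ∑ a : Fin N, (if a ≤ i then g a else 0) = ∑ a ∈ Finset.range (i + 1), g a := by
  simp only [Fin.le_def]
  rw [Fin.sum_univ_eq_sum_range (fun a => if a ≤ (i : ℕ) then g a else 0), ← Finset.sum_filter]
  congr 1
  ext a
  simp only [Finset.mem_filter, Finset.mem_range]
  lia

/-- The lower triangular Toeplitz matrix `(f_{i-j})_{j ≤ i < N}` of the coefficients of
`F = ∑ fₙ Xⁿ`. -/
noncomputable def toeplitz {R : Type*} [CommRing R] (F : R⟦X⟧) (N : ℕ) :
    Matrix (Fin N) (Fin N) R :=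
  Matrix.of fun i j => if j ≤ i then coeff ((i : ℕ) - j) F else 0

theorem det_toeplitz {R : Type*} [CommRing R] (F : R⟦X⟧) (N : ℕ) :
    (toeplitz F N).det = constantCoeff F ^ N := by
  rw [Matrix.det_of_isLowerTriangular]
  · simp [toeplitz]
  · intro i j hij
    exact if_neg (not_le_of_gt (show i < j from hij))

theorem toeplitz_mul_mul_transpose_apply {R : Type*} [CommRing R] (F H : R⟦X⟧) {N : ℕ}
    (i j : Fin N) :
    (toeplitz F N * Matrix.of (fun a c : Fin N => coeff ((a : ℕ) + c) H)
        * (toeplitz F N).transpose) i j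
      = ∑ a ∈ Finset.range (i + 1), ∑ c ∈ Finset.range (j + 1),
          coeff (i - a) F * coeff (a + c) H * coeff (j - c) F := by
  rw [Finset.sum_comm, ← sum_fin_ite_le j]
  simp only [← sum_fin_ite_le i, Matrix.mul_apply, Matrix.transpose_apply, toeplitz,
    Matrix.of_apply, Finset.sum_mul, mul_ite, ite_mul, zero_mul, mul_zero]

theorem hankelDet_succ (hF : constantCoeff F ≠ 0) (N : ℕ) :
    hankelDet F (N + 1) = constantCoeff F * hankelDet (jFractionTail F) N := by
  let S : Matrix (Fin N) (Fin N) K := Matrix.of fun i j =>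
    coeff (i + j + 2) F - coeff (i + 1) F * (constantCoeff F)⁻¹ * coeff (j + 1) F
  have hschur : hankelDet F (N + 1) = constantCoeff F * S.det := by
    rw [hankelDet, det_succ_eq_mul_det_schur _ (by simpa using hF)]
    simp [S, ← add_assoc, add_right_comm _ 1]
  have hfactor : constantCoeff F ^ 2 • S
      = toeplitz F N * Matrix.of (fun a c : Fin N => coeff ((a : ℕ) + c) (jFractionTail F))
        * (toeplitz F N).transpose := by
    ext i j
    rw [toeplitz_mul_mul_transpose_apply, sum_coeff_mul_jFractionTail_mul_coeff hF]
    simp only [S, Matrix.smul_apply, Matrix.of_apply, smul_eq_mul]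
    field_simp
  have hS : S.det = hankelDet (jFractionTail F) N := by
    have h := congrArg Matrix.det hfactor
    rw [Matrix.det_smul, Fintype.card_fin, Matrix.det_mul, Matrix.det_mul, Matrix.det_transpose,
      det_toeplitz] at h
    refine mul_left_cancel₀ (pow_ne_zero N (pow_ne_zero 2 hF)) (h.trans ?_)
    rw [hankelDet]
    ring
  rw [hschur, hS]

end Hankel

section CoeffDeriv

variable {𝕜 : Type*} [NontriviallyNormedField 𝕜] {F G : 𝕜 → 𝕜⟦X⟧} {F' G' : 𝕜⟦X⟧} {z : 𝕜}

/-- Coefficientwise differentiability of a family of power series: every coefficient of `F` has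
at `z` the corresponding coefficient of `F'` as derivative. -/
def HasCoeffDerivAt (F : 𝕜 → 𝕜⟦X⟧) (F' : 𝕜⟦X⟧) (z : 𝕜) : Prop :=
  ∀ n, HasDerivAt (fun t => coeff n (F t)) (coeff n F') z

/-- The coefficientwise derivative of a family of power series; a coefficient that is not
differentiable at `z` contributes `0`. -/
noncomputable def coeffDeriv (F : 𝕜 → 𝕜⟦X⟧) (z : 𝕜) : 𝕜⟦X⟧ :=
  PowerSeries.mk fun n => deriv (fun t => coeff n (F t)) z

theorem hasCoeffDerivAt_coeffDeriv (h : ∀ n, DifferentiableAt 𝕜 (fun t => coeff n (F t)) z) :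
    HasCoeffDerivAt F (coeffDeriv F z) z := fun n => by
  simpa only [coeffDeriv, coeff_mk] using (h n).hasDerivAt

theorem hasCoeffDerivAt_const (A : 𝕜⟦X⟧) : HasCoeffDerivAt (fun _ => A) 0 z := fun n => by
  simpa using hasDerivAt_const z (coeff n A)

theorem hasCoeffDerivAt_C {c : 𝕜 → 𝕜} {c' : 𝕜} (hc : HasDerivAt c c' z) :
    HasCoeffDerivAt (fun t => C (c t)) (C c') z := fun n => by
  rcases n with _ | n
  · simpa using hc
  · simpa [coeff_C] using hasDerivAt_const z (0 : 𝕜)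

namespace HasCoeffDerivAt

theorem unique (hF : HasCoeffDerivAt F F' z) (hG : HasCoeffDerivAt G G' z) (h : F =ᶠ[𝓝 z] G) :
    F' = G' := by
  ext n
  exact (hF n).unique ((hG n).congr_of_eventuallyEq (h.fun_comp (coeff n)))

theorem hasDerivAt_constantCoeff (hF : HasCoeffDerivAt F F' z) :
    HasDerivAt (fun t => constantCoeff (F t)) (constantCoeff F') z := by
  simpa only [coeff_zero_eq_constantCoeff] using hF 0

theorem sub (hF : HasCoeffDerivAt F F' z) (hG : HasCoeffDerivAt G G' z) :
    HasCoeffDerivAt (fun t => F t - G t) (F' - G') z := fun n => by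
  simpa only [map_sub] using (hF n).fun_sub (hG n)

theorem mul (hF : HasCoeffDerivAt F F' z) (hG : HasCoeffDerivAt G G' z) :
    HasCoeffDerivAt (fun t => F t * G t) (F' * G z + F z * G') z := fun n => by
  simp only [map_add, coeff_mul, ← Finset.sum_add_distrib]
  exact HasDerivAt.fun_sum fun ij _ => (hF ij.1).mul (hG ij.2)

theorem differentiableAt_coeff_inv (hF : HasCoeffDerivAt F F' z) (h0 : constantCoeff (F z) ≠ 0)
    (n : ℕ) : DifferentiableAt 𝕜 (fun t => coeff n (F t)⁻¹) z := by
  have hinv : DifferentiableAt 𝕜 (fun t => (constantCoeff (F t))⁻¹) z :=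
    hF.hasDerivAt_constantCoeff.differentiableAt.fun_inv h0
  induction n using Nat.strong_induction_on with
  | _ n ih =>
    rw [funext fun t => PowerSeries.coeff_inv n (F t)]
    split_ifs
    · exact hinv
    · refine hinv.fun_neg.fun_mul (DifferentiableAt.fun_sum fun ij _ => ?_)
      split_ifs with hlt
      · exact (hF ij.1).differentiableAt.fun_mul (ih ij.2 hlt)
      · exact differentiableAt_const 0

theorem inv (hF : HasCoeffDerivAt F F' z) (h0 : constantCoeff (F z) ≠ 0) :
    HasCoeffDerivAt (fun t => (F t)⁻¹) (-F' * (F z)⁻¹ ^ 2) z := by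
  have hinv := hasCoeffDerivAt_coeffDeriv (hF.differentiableAt_coeff_inv h0)
  have hone : (fun t => F t * (F t)⁻¹) =ᶠ[𝓝 z] fun _ => 1 :=
    (hF.hasDerivAt_constantCoeff.continuousAt.eventually_ne h0).mono fun t ht =>
      PowerSeries.mul_inv_cancel (F t) ht
  have hprod := (hF.mul hinv).unique (hasCoeffDerivAt_const 1) hone
  convert hinv using 1
  linear_combination -(F z)⁻¹ * hprod
    + coeffDeriv (fun t => (F t)⁻¹) z * PowerSeries.mul_inv_cancel (F z) h0

theorem X_sq_mul_coeffDeriv_jFractionTail (hF : HasCoeffDerivAt F F' z)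
    (h0 : constantCoeff (F z) ≠ 0) :
    X ^ 2 * coeffDeriv (fun t => jFractionTail (F t)) z
      = C (constantCoeff F') - C (coeff 1 F') * X
        - C (2 * constantCoeff (F z) * constantCoeff F') * (F z)⁻¹
        + C (constantCoeff (F z) ^ 2) * F' * (F z)⁻¹ ^ 2 := by
  have hc : HasDerivAt (fun t => constantCoeff (F t)) (constantCoeff F') z :=
    hF.hasDerivAt_constantCoeff
  have htail : HasCoeffDerivAt (fun t => jFractionTail (F t)) _ z :=
    hasCoeffDerivAt_coeffDeriv fun n => by
      simpa only [jFractionTail, coeff_mk] using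
        (hc.differentiableAt.fun_pow 2).fun_neg.fun_mul (hF.differentiableAt_coeff_inv h0 (n + 2))
  have heq : (fun t => X ^ 2 * jFractionTail (F t)) =ᶠ[𝓝 z] _ :=
    (hc.continuousAt.eventually_ne h0).mono fun t ht => X_sq_mul_jFractionTail ht
  have h := ((hasCoeffDerivAt_const (X ^ 2)).mul htail).unique
    (((hasCoeffDerivAt_C hc).sub ((hasCoeffDerivAt_C (hF 1)).mul (hasCoeffDerivAt_const X))).sub
      ((hasCoeffDerivAt_C (hc.fun_pow 2)).mul (hF.inv h0))) heq
  simp only [Nat.cast_ofNat, Nat.add_one_sub_one, pow_one] at h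
  linear_combination h

end HasCoeffDerivAt

end CoeffDeriv

section Riccati

variable {𝕜 : Type*} [NontriviallyNormedField 𝕜] {U V : Set 𝕜} {q : 𝕜 → 𝕜} {F : 𝕜 → 𝕜⟦X⟧}

/-- The Riccati equation `F = f₀ + X ∂_z F + q X² F²` for the generating series `F = ∑ fₙ Xⁿ`,
which encodes the recursion `fₙ₊₁ = fₙ' + q ∑ fₖ fₙ₋₁₋ₖ`. -/
def SatisfiesRiccati (U : Set 𝕜) (q : 𝕜 → 𝕜) (F : 𝕜 → 𝕜⟦X⟧) : Prop :=
  ∀ z ∈ U, F z = C (constantCoeff (F z)) + X * coeffDeriv F z + C (q z) * (X ^ 2 * F z ^ 2)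

theorem coeff_succ_X_sq_mul_sq {R : Type*} [CommSemiring R] (A : R⟦X⟧) (n : ℕ) :
    coeff (n + 1) (X ^ 2 * A ^ 2)
      = ∑ k ∈ Finset.range n, coeff k A * coeff (n - 1 - k) A := by
  rcases n with _ | n
  · simp [coeff_X_pow_mul']
  · rw [show n + 1 + 1 = n + 2 from rfl, coeff_X_pow_mul, sq, coeff_mul,
      Finset.Nat.sum_antidiagonal_eq_sum_range_succ_mk]
    rfl

theorem satisfiesRiccati_iff : SatisfiesRiccati U q F ↔ ∀ z ∈ U, ∀ n,
    coeff (n + 1) (F z) = deriv (fun t => coeff n (F t)) z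
      + q z * ∑ k ∈ Finset.range n, coeff k (F z) * coeff (n - 1 - k) (F z) := by
  refine forall₂_congr fun z _ => ?_
  simp only [PowerSeries.ext_iff, map_add, coeff_C_mul, ← coeff_succ_X_sq_mul_sq]
  refine ⟨fun h n => ?_, fun h n => ?_⟩
  · simpa [coeff_succ_X_mul, coeffDeriv] using h (n + 1)
  · rcases n with _ | n
    · simp
    · simpa [coeff_succ_X_mul, coeffDeriv] using h n

/-- With primes for `z`-derivatives and `J = 1 / F`: the continued fraction step
`F = p² / (p - p' x - x² H)` turns the Riccati equation for `F` into one for `H`. -/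
theorem riccati_of_continued_fraction {R : Type*} [CommRing R] [IsDomain R]
    {x F J F' H H' p p' p'' q r : R} (hx : x ≠ 0) (hinv : F * J = 1)
    (hF : F = p + x * F' + q * (x ^ 2 * F ^ 2))
    (hH : x ^ 2 * H = p - p' * x - p ^ 2 * J)
    (hH' : x ^ 2 * H' = p' - p'' * x - 2 * p * p' * J + p ^ 2 * F' * J ^ 2)
    (hr : p * r = p * p'' - p' ^ 2 + q * p ^ 3) :
    p * H = p * r + p * (x * H') + x ^ 2 * H ^ 2 := by
  refine mul_left_cancel₀ (pow_ne_zero 2 hx) ?_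
  linear_combination p * hH - x ^ 2 * hr - p * x * hH' - (x ^ 2 * H + p - p' * x - p ^ 2 * J) * hH
    + p ^ 3 * J ^ 2 * hF + (-p ^ 3 * J + q * p ^ 3 * x ^ 2 * (F * J + 1)) * hinv

namespace SatisfiesRiccati

theorem mono (hF : SatisfiesRiccati U q F) (hVU : V ⊆ U) : SatisfiesRiccati V q F :=
  fun z hz => hF z (hVU hz)

theorem coeff_one (hF : SatisfiesRiccati U q F) {z : 𝕜} (hz : z ∈ U) :
    coeff 1 (F z) = deriv (fun t => constantCoeff (F t)) z := by
  simpa using satisfiesRiccati_iff.1 hF z hz 0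

theorem deriv_coeff_one (hF : SatisfiesRiccati U q F) (hU : IsOpen U) {z : 𝕜} (hz : z ∈ U) :
    deriv (fun t => coeff 1 (F t)) z = deriv (deriv fun t => constantCoeff (F t)) z :=
  (eventuallyEq_of_mem (hU.mem_nhds hz) fun _ ht => hF.coeff_one ht).deriv_eq

theorem coeff_two (hF : SatisfiesRiccati U q F) (hU : IsOpen U) {z : 𝕜} (hz : z ∈ U) :
    coeff 2 (F z) = deriv (deriv fun t => constantCoeff (F t)) z
      + q z * constantCoeff (F z) ^ 2 := by
  rw [satisfiesRiccati_iff.1 hF z hz 1, hF.deriv_coeff_one hU hz]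
  simp [sq]

theorem contDiffOn_coeff (hF : SatisfiesRiccati U q F) (hU : IsOpen U) (hq : ContDiffOn 𝕜 ∞ q U)
    (h0 : ContDiffOn 𝕜 ∞ (fun z => constantCoeff (F z)) U) (n : ℕ) :
    ContDiffOn 𝕜 ∞ (fun z => coeff n (F z)) U := by
  induction n using Nat.strong_induction_on with
  | _ n ih =>
    rcases n with _ | n
    · simpa only [coeff_zero_eq_constantCoeff] using h0
    · refine ContDiffOn.congr ?_ fun z hz => satisfiesRiccati_iff.1 hF z hz n
      refine ((ih n (by lia)).deriv_of_isOpen hU le_rfl).add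
        (hq.mul (ContDiffOn.sum fun k hk => ?_))
      have := Finset.mem_range.1 hk
      exact (ih k (by lia)).mul (ih (n - 1 - k) (by lia))

theorem hasCoeffDerivAt (hF : SatisfiesRiccati U q F) (hU : IsOpen U) (hq : ContDiffOn 𝕜 ∞ q U)
    (h0 : ContDiffOn 𝕜 ∞ (fun z => constantCoeff (F z)) U) {z : 𝕜} (hz : z ∈ U) :
    HasCoeffDerivAt F (coeffDeriv F z) z :=
  hasCoeffDerivAt_coeffDeriv fun n =>
    ((hF.contDiffOn_coeff hU hq h0 n).contDiffAt (hU.mem_nhds hz)).differentiableAt (by simp)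

theorem eq_zero (hF : SatisfiesRiccati U q F) (hU : IsOpen U)
    (h0 : ∀ z ∈ U, constantCoeff (F z) = 0) : ∀ z ∈ U, F z = 0 := by
  suffices ∀ n, ∀ z ∈ U, coeff n (F z) = 0 from fun z hz => PowerSeries.ext fun n => this n z hz
  intro n
  induction n using Nat.strong_induction_on with
  | _ n ih =>
    intro z hz
    rcases n with _ | n
    · simpa only [coeff_zero_eq_constantCoeff] using h0 z hz
    · have hderiv : deriv (fun t => coeff n (F t)) z = 0 := by
        rw [(eventuallyEq_of_mem (hU.mem_nhds hz) (ih n (by lia))).deriv_eq, deriv_const]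
      rw [satisfiesRiccati_iff.1 hF z hz n, hderiv, zero_add, Finset.sum_eq_zero, mul_zero]
      intro k hk
      rw [ih k (by have := Finset.mem_range.1 hk; lia) z hz, zero_mul]

theorem constantCoeff_mul_constantCoeff_jFractionTail (hF : SatisfiesRiccati U q F)
    (hU : IsOpen U) {z : 𝕜} (hz : z ∈ U) (hne : constantCoeff (F z) ≠ 0) :
    constantCoeff (F z) * constantCoeff (jFractionTail (F z))
      = constantCoeff (F z) * deriv (deriv fun t => constantCoeff (F t)) z
        - deriv (fun t => constantCoeff (F t)) z ^ 2 + q z * constantCoeff (F z) ^ 3 := by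
  rw [constantCoeff_mul_jFractionTail hne, hF.coeff_one hz, hF.coeff_two hU hz]
  ring

theorem jFractionTail (hF : SatisfiesRiccati U q F) (hU : IsOpen U) (hq : ContDiffOn 𝕜 ∞ q U)
    (h0 : ContDiffOn 𝕜 ∞ (fun z => constantCoeff (F z)) U)
    (hne : ∀ z ∈ U, constantCoeff (F z) ≠ 0) :
    SatisfiesRiccati U (fun z => (constantCoeff (F z))⁻¹) fun z => jFractionTail (F z) := by
  intro z hz
  set p := constantCoeff (F z)
  set p' := deriv (fun t => constantCoeff (F t)) z with hp'
  set p'' := deriv (deriv fun t => constantCoeff (F t)) z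
  have hp : p ≠ 0 := hne z hz
  have hCp : (C p : 𝕜⟦X⟧) ≠ 0 := (map_ne_zero_iff C C_injective).2 hp
  have hinv : F z * (F z)⁻¹ = 1 := PowerSeries.mul_inv_cancel _ hp
  have hpinv : (C p : 𝕜⟦X⟧) * C p⁻¹ = 1 := by rw [← map_mul, mul_inv_cancel₀ hp, map_one]
  have htail := X_sq_mul_jFractionTail hp
  have htail' := (hF.hasCoeffDerivAt hU hq h0 hz).X_sq_mul_coeffDeriv_jFractionTail hp
  have htail0 := congrArg (C (R := 𝕜)) (hF.constantCoeff_mul_constantCoeff_jFractionTail hU hz hp)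
  have hcoeff0 : constantCoeff (coeffDeriv F z) = p' := by
    rw [← coeff_zero_eq_constantCoeff_apply, coeffDeriv, coeff_mk]
    simp only [coeff_zero_eq_constantCoeff, hp']
  have hcoeff1 : coeff 1 (coeffDeriv F z) = p'' := by
    rw [coeffDeriv, coeff_mk, hF.deriv_coeff_one hU hz]
  rw [hcoeff0, hcoeff1] at htail'
  rw [hF.coeff_one hz] at htail
  have hRic := hF z hz
  simp only [map_mul, map_add, map_sub, map_pow, map_ofNat] at htail htail' htail0
  have h := riccati_of_continued_fraction X_ne_zero hinv hRic htail htail' htail0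
  refine mul_left_cancel₀ hCp ?_
  linear_combination h - X ^ 2 * _root_.jFractionTail (F z) ^ 2 * hpinv

end SatisfiesRiccati

end Riccati

section Hirota

variable {𝕜 : Type*} [NontriviallyNormedField 𝕜] {U : Set 𝕜} {f f₁ g g₁ p : 𝕜 → 𝕜} {z : 𝕜}

/-- Hirota's bilinear operator `D_zⁿ g·f`, the `n`-th derivative of `g (z + t) * f (z - t)` with
respect to `t` at `t = 0`. -/
noncomputable def hirotaD (n : ℕ) (g f : 𝕜 → 𝕜) (z : 𝕜) : 𝕜 :=
  ∑ i ∈ Finset.range (n + 1),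
    (-1) ^ i * n.choose i * iteratedDeriv (n - i) g z * iteratedDeriv i f z

theorem hirotaD_one : hirotaD 1 g f z = deriv g z * f z - g z * deriv f z := by
  simp only [hirotaD, Finset.sum_range_succ, Finset.sum_range_zero]
  norm_num [iteratedDeriv_succ]
  ring

theorem hirotaD_two : hirotaD 2 g f z
    = deriv (deriv g) z * f z - 2 * deriv g z * deriv f z + g z * deriv (deriv f) z := by
  simp only [hirotaD, Finset.sum_range_succ, Finset.sum_range_zero]
  norm_num [iteratedDeriv_succ]
  ring

theorem hirotaD_three : hirotaD 3 g f z
    = deriv (deriv (deriv g)) z * f z - 3 * deriv (deriv g) z * deriv f z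
      + 3 * deriv g z * deriv (deriv f) z - g z * deriv (deriv (deriv f)) z := by
  simp only [hirotaD, Finset.sum_range_succ, Finset.sum_range_zero]
  norm_num [iteratedDeriv_succ, Nat.choose]
  ring

theorem hirotaD_swap (n : ℕ) : hirotaD n f g z = (-1) ^ n * hirotaD n g f z := by
  rw [hirotaD, ← Finset.sum_range_reflect, hirotaD, Finset.mul_sum]
  refine Finset.sum_congr rfl fun i hi => ?_
  obtain ⟨j, rfl⟩ := Nat.exists_eq_add_of_le' (Finset.mem_range_succ_iff.1 hi)
  rw [show j + i + 1 - 1 - i = j by lia, Nat.add_sub_cancel_left, Nat.add_sub_cancel,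
    Nat.choose_symm_add, pow_add]
  have hsign : (-1 : 𝕜) ^ (i + i) = 1 := Even.neg_one_pow ⟨i, rfl⟩
  linear_combination -(-1) ^ j * (j + i).choose i * iteratedDeriv i f z * iteratedDeriv j g z
    * hsign

theorem hirotaD_congr (hg : g =ᶠ[𝓝 z] g₁) (hf : f =ᶠ[𝓝 z] f₁) (n : ℕ) :
    hirotaD n g f z = hirotaD n g₁ f₁ z := by
  simp only [hirotaD, hg.iteratedDeriv_eq, hf.iteratedDeriv_eq]

theorem continuousOn_hirotaD (hU : IsOpen U) (n : ℕ) (hg : ContDiffOn 𝕜 n g U)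
    (hf : ContDiffOn 𝕜 n f U) : ContinuousOn (hirotaD n g f) U := by
  have hcont {i : ℕ} (hi : i ≤ n) {h : 𝕜 → 𝕜} (hh : ContDiffOn 𝕜 n h U) :
      ContinuousOn (iteratedDeriv i h) U :=
    (hh.continuousOn_iteratedDerivWithin (by exact_mod_cast hi) hU.uniqueDiffOn).congr
      fun _ hz => (iteratedDerivWithin_of_isOpen hU hz).symm
  exact continuousOn_finsetSum _ fun i hi =>
    (continuousOn_const.mul (hcont (Nat.sub_le n i) hg)).mul
      (hcont (Finset.mem_range_succ_iff.1 hi) hf)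

theorem hirotaD_one_gauge (hp : DifferentiableAt 𝕜 p z) (hg : DifferentiableAt 𝕜 g z)
    (hf : DifferentiableAt 𝕜 f z) :
    hirotaD 1 (fun t => p t * g t) (fun t => p t * f t) z = p z ^ 2 * hirotaD 1 g f z := by
  simp only [hirotaD_one, deriv_fun_mul hp hg, deriv_fun_mul hp hf]
  ring

theorem hirotaD_three_gauge (hp : ContDiffAt 𝕜 3 p z) (hg : ContDiffAt 𝕜 3 g z)
    (hf : ContDiffAt 𝕜 3 f z) :
    hirotaD 3 (fun t => p t * g t) (fun t => p t * f t) z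
      = p z ^ 2 * hirotaD 3 g f z + 3 * hirotaD 2 p p z * hirotaD 1 g f z := by
  have leibniz {n : ℕ} (hn : n ≤ 3) {h : 𝕜 → 𝕜} (hh : ContDiffAt 𝕜 3 h z) :=
    iteratedDeriv_fun_mul (n := n) (hp.of_le (by exact_mod_cast hn))
      (hh.of_le (by exact_mod_cast hn))
  simp only [hirotaD, Finset.sum_range_succ, Finset.sum_range_zero]
  norm_num [leibniz, hg, hf, Finset.sum_range_succ, Nat.choose]
  ring

/-- The bilinear form `(D_z³ + (3 w - 2 z) D_z - c) g·f` at `z`, with `w` the value of the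
solution at `z`. The bilinear equation of index `N` has `c = 4 (α + N + 1/2)`. -/
noncomputable def painleve34Bilinear (w c : 𝕜) (g f : 𝕜 → 𝕜) (z : 𝕜) : 𝕜 :=
  hirotaD 3 g f z + (3 * w - 2 * z) * hirotaD 1 g f z - c * (g z * f z)

theorem painleve34Bilinear_swap (w c : 𝕜) :
    painleve34Bilinear w c f g z = -painleve34Bilinear w (-c) g f z := by
  rw [painleve34Bilinear, hirotaD_swap 3, hirotaD_swap 1, painleve34Bilinear]
  ring

theorem painleve34Bilinear_congr (hg : g =ᶠ[𝓝 z] g₁) (hf : f =ᶠ[𝓝 z] f₁) (w c : 𝕜) :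
    painleve34Bilinear w c g f z = painleve34Bilinear w c g₁ f₁ z := by
  rw [painleve34Bilinear, hirotaD_congr hg hf, hirotaD_congr hg hf, hg.eq_of_nhds,
    hf.eq_of_nhds, painleve34Bilinear]

theorem painleve34Bilinear_eq_zero (hf : f =ᶠ[𝓝 z] 0) (w c : 𝕜) :
    painleve34Bilinear w c g f z = 0 := by
  rw [painleve34Bilinear_congr .rfl hf]
  simp [painleve34Bilinear, hirotaD]

theorem continuousOn_painleve34Bilinear {w : 𝕜 → 𝕜} (hU : IsOpen U) (hw : ContinuousOn w U)
    (c : 𝕜) (hg : ContDiffOn 𝕜 3 g U) (hf : ContDiffOn 𝕜 3 f U) :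
    ContinuousOn (fun z => painleve34Bilinear (w z) c g f z) U := by
  have hD3 := continuousOn_hirotaD hU 3 hg hf
  have hD1 := continuousOn_hirotaD hU 1 (hg.of_le (by norm_num)) (hf.of_le (by norm_num))
  have hg0 := hg.continuousOn
  have hf0 := hf.continuousOn
  unfold painleve34Bilinear
  fun_prop

theorem painleve34Bilinear_gauge (hp : ContDiffAt 𝕜 3 p z) (hg : ContDiffAt 𝕜 3 g z)
    (hf : ContDiffAt 𝕜 3 f z) {w w₁ : 𝕜} (hw : hirotaD 2 p p z = p z ^ 2 * (w₁ - w)) (c : 𝕜) :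
    painleve34Bilinear w c (fun t => p t * g t) (fun t => p t * f t) z
      = p z ^ 2 * painleve34Bilinear w₁ c g f z := by
  rw [painleve34Bilinear, hirotaD_three_gauge hp hg hf,
    hirotaD_one_gauge (hp.differentiableAt (by simp)) (hg.differentiableAt (by simp))
      (hf.differentiableAt (by simp)), hw, painleve34Bilinear]
  ring

end Hirota

section Factorization

variable {𝕜 : Type*} [NontriviallyNormedField 𝕜] {U V : Set 𝕜} {α : 𝕜} {w p q r : 𝕜 → 𝕜} {z : 𝕜}

/-- The linear system behind a solution `w` of Painlevé XXXIV with parameter `α`: `w = 2 p q` for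
two solutions `p`, `q` of `y'' = (2 z - w) y` whose Wronskian `p' q - p q'` is `2 α`. -/
structure Painleve34Factorization (U : Set 𝕜) (α : 𝕜) (w p q : 𝕜 → 𝕜) : Prop where
  contDiffOn_left : ContDiffOn 𝕜 ∞ p U
  contDiffOn_right : ContDiffOn 𝕜 ∞ q U
  eq_two_mul : ∀ z ∈ U, w z = 2 * (p z * q z)
  deriv_deriv_left : ∀ z ∈ U, deriv (deriv p) z = (2 * z - w z) * p z
  deriv_deriv_right : ∀ z ∈ U, deriv (deriv q) z = (2 * z - w z) * q z
  wronskian : ∀ z ∈ U, deriv p z * q z - p z * deriv q z = 2 * α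

theorem hasDerivAt_of_contDiffOn {f : 𝕜 → 𝕜} (hU : IsOpen U) (hf : ContDiffOn 𝕜 ∞ f U)
    (hz : z ∈ U) : HasDerivAt f (deriv f z) z :=
  (hf.differentiableOn (by simp)).hasDerivAt (hU.mem_nhds hz)

theorem deriv_eq_of_forall_mem_eq {f g : 𝕜 → 𝕜} {g' : 𝕜} (hU : IsOpen U) (hz : z ∈ U)
    (h : ∀ t ∈ U, f t = g t) (hg : HasDerivAt g g' z) : deriv f z = g' :=
  (hg.congr_of_eventuallyEq (eventuallyEq_of_mem (hU.mem_nhds hz) h)).deriv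

theorem hasDerivAt_wronskian {p q : 𝕜 → 𝕜} (hU : IsOpen U) (hp : ContDiffOn 𝕜 ∞ p U)
    (hq : ContDiffOn 𝕜 ∞ q U) (hz : z ∈ U) :
    HasDerivAt (fun t => deriv p t * q t - p t * deriv q t)
      (deriv (deriv p) z * q z - p z * deriv (deriv q) z) z := by
  have hp' := hasDerivAt_of_contDiffOn hU (hp.deriv_of_isOpen hU le_rfl) hz
  have hq' := hasDerivAt_of_contDiffOn hU (hq.deriv_of_isOpen hU le_rfl) hz
  refine ((hp'.fun_mul (hasDerivAt_of_contDiffOn hU hq hz)).fun_sub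
    ((hasDerivAt_of_contDiffOn hU hp hz).fun_mul hq')).congr_deriv ?_
  ring

theorem deriv_deriv_eq_of_wronskian_eq_const {c d : 𝕜} (hU : IsOpen U) (hp : ContDiffOn 𝕜 ∞ p U)
    (hq : ContDiffOn 𝕜 ∞ q U) (hw : ∀ t ∈ U, deriv p t * q t - p t * deriv q t = c)
    (hz : z ∈ U) (hpz : p z ≠ 0) (hp2 : deriv (deriv p) z = d * p z) :
    deriv (deriv q) z = d * q z := by
  have h := (hasDerivAt_wronskian hU hp hq hz).unique
    ((hasDerivAt_const z c).congr_of_eventuallyEq (eventuallyEq_of_mem (hU.mem_nhds hz) hw))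
  refine mul_left_cancel₀ hpz ?_
  linear_combination q z * hp2 - h

theorem deriv_deriv_fun_inv (hU : IsOpen U) (hp : ContDiffOn 𝕜 ∞ p U)
    (hne : ∀ z ∈ U, p z ≠ 0) (hz : z ∈ U) :
    deriv (deriv fun t => (p t)⁻¹) z
      = -deriv (deriv p) z / p z ^ 2 + 2 * deriv p z ^ 2 / p z ^ 3 := by
  have hpz := hne z hz
  refine deriv_eq_of_forall_mem_eq hU hz (fun t ht =>
    deriv_fun_inv'' (hasDerivAt_of_contDiffOn hU hp ht).differentiableAt (hne t ht)) ?_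
  have hp' := hasDerivAt_of_contDiffOn hU (hp.deriv_of_isOpen hU le_rfl) hz
  refine (hp'.fun_neg.fun_div ((hasDerivAt_of_contDiffOn hU hp hz).fun_pow 2)
    (pow_ne_zero 2 hpz)).congr_deriv ?_
  field_simp
  push_cast
  ring

namespace Painleve34Factorization

theorem symm (h : Painleve34Factorization U α w p q) :
    Painleve34Factorization U (-α) w q p where
  contDiffOn_left := h.contDiffOn_right
  contDiffOn_right := h.contDiffOn_left
  eq_two_mul z hz := by rw [h.eq_two_mul z hz, mul_comm (p z)]
  deriv_deriv_left := h.deriv_deriv_right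
  deriv_deriv_right := h.deriv_deriv_left
  wronskian z hz := by linear_combination -h.wronskian z hz

theorem mono (h : Painleve34Factorization U α w p q) (hVU : V ⊆ U) :
    Painleve34Factorization V α w p q where
  contDiffOn_left := h.contDiffOn_left.mono hVU
  contDiffOn_right := h.contDiffOn_right.mono hVU
  eq_two_mul z hz := h.eq_two_mul z (hVU hz)
  deriv_deriv_left z hz := h.deriv_deriv_left z (hVU hz)
  deriv_deriv_right z hz := h.deriv_deriv_right z (hVU hz)
  wronskian z hz := h.wronskian z (hVU hz)

theorem hasDerivAt (h : Painleve34Factorization U α w p q) (hU : IsOpen U) (hz : z ∈ U) :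
    HasDerivAt w (2 * (deriv p z * q z + p z * deriv q z)) z :=
  (((hasDerivAt_of_contDiffOn hU h.contDiffOn_left hz).fun_mul
    (hasDerivAt_of_contDiffOn hU h.contDiffOn_right hz)).const_mul 2).congr_of_eventuallyEq
      (eventuallyEq_of_mem (hU.mem_nhds hz) h.eq_two_mul)

theorem of_linear (hU : IsOpen U) (h2 : (2 : 𝕜) ≠ 0) (hw : ContDiffOn 𝕜 ∞ w U)
    (hp : ContDiffOn 𝕜 ∞ p U) (hne : ∀ z ∈ U, p z ≠ 0)
    (hL1 : ∀ z ∈ U, 2 * w z * deriv p z - deriv w z * p z - 4 * α * p z = 0)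
    (hL2 : ∀ z ∈ U, deriv (deriv p) z + (w z - 2 * z) * p z = 0)
    (hq : ∀ z ∈ U, q z = w z / (2 * p z)) : Painleve34Factorization U α w p q := by
  have hsmooth : ContDiffOn 𝕜 ∞ q U :=
    (hw.div (contDiffOn_const.mul hp) fun z hz => mul_ne_zero h2 (hne z hz)).congr hq
  have hfactor : ∀ z ∈ U, w z = 2 * (p z * q z) := fun z hz => by
    have := hne z hz
    rw [hq z hz]
    field_simp
  have hwronskian : ∀ z ∈ U, deriv p z * q z - p z * deriv q z = 2 * α := fun z hz => by
    have hL := hL1 z hz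
    rw [deriv_eq_of_forall_mem_eq hU hz hfactor (((hasDerivAt_of_contDiffOn hU hp hz).fun_mul
      (hasDerivAt_of_contDiffOn hU hsmooth hz)).const_mul 2), hfactor z hz] at hL
    refine mul_left_cancel₀ (mul_ne_zero h2 (hne z hz)) ?_
    linear_combination hL
  have hleft : ∀ z ∈ U, deriv (deriv p) z = (2 * z - w z) * p z := fun z hz => by
    linear_combination hL2 z hz
  exact ⟨hp, hsmooth, hfactor, hleft, fun z hz => deriv_deriv_eq_of_wronskian_eq_const hU hp hsmooth
    hwronskian hz (hne z hz) (hleft z hz), hwronskian⟩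

theorem deriv_mul_backlund (h : Painleve34Factorization U α w p q) (hU : IsOpen U)
    (hr : ∀ z ∈ U, p z * r z = p z * deriv (deriv p) z - deriv p z ^ 2 + q z * p z ^ 3)
    (hz : z ∈ U) : deriv (fun t => p t * r t) z = 2 * (α + 1) * p z ^ 2 := by
  have hexpand : ∀ t ∈ U, p t * r t = 2 * t * p t ^ 2 - q t * p t ^ 3 - deriv p t ^ 2 :=
    fun t ht => by rw [hr t ht, h.deriv_deriv_left t ht, h.eq_two_mul t ht]; ring
  have hp := hasDerivAt_of_contDiffOn hU h.contDiffOn_left hz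
  have hp' := hasDerivAt_of_contDiffOn hU (h.contDiffOn_left.deriv_of_isOpen hU le_rfl) hz
  have hq := hasDerivAt_of_contDiffOn hU h.contDiffOn_right hz
  rw [deriv_eq_of_forall_mem_eq hU hz hexpand (((((hasDerivAt_id' z).const_mul 2).fun_mul
    (hp.fun_pow 2)).fun_sub (hq.fun_mul (hp.fun_pow 3))).fun_sub (hp'.fun_pow 2))]
  rw [h.deriv_deriv_left z hz, h.eq_two_mul z hz]
  push_cast
  linear_combination p z ^ 2 * h.wronskian z hz

theorem backlund (h : Painleve34Factorization U α w p q) (hU : IsOpen U)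
    (hne : ∀ z ∈ U, p z ≠ 0)
    (hr : ∀ z ∈ U, p z * r z = p z * deriv (deriv p) z - deriv p z ^ 2 + q z * p z ^ 3) :
    Painleve34Factorization U (α + 1) (fun z => 2 * (r z * (p z)⁻¹)) r fun z => (p z)⁻¹ := by
  have hp := h.contDiffOn_left
  have hp' := hp.deriv_of_isOpen hU (m := ∞) le_rfl
  have hinv : ContDiffOn 𝕜 ∞ (fun z => (p z)⁻¹) U := hp.inv hne
  have hsmooth : ContDiffOn 𝕜 ∞ r U := by
    refine (((hp.mul (hp'.deriv_of_isOpen hU le_rfl)).sub (hp'.pow 2) |>.add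
      (h.contDiffOn_right.mul (hp.pow 3))).mul hinv).congr fun z hz => ?_
    rw [← hr z hz, mul_comm, inv_mul_cancel_left₀ (hne z hz)]
  have hwronskian : ∀ z ∈ U, deriv r z * (p z)⁻¹ - r z * deriv (fun t => (p t)⁻¹) z
      = 2 * (α + 1) := fun z hz => by
    have hpz := hne z hz
    have hpr := h.deriv_mul_backlund hU hr hz
    rw [((hasDerivAt_of_contDiffOn hU hp hz).fun_mul
      (hasDerivAt_of_contDiffOn hU hsmooth hz)).deriv] at hpr
    rw [deriv_fun_inv'' (hasDerivAt_of_contDiffOn hU hp hz).differentiableAt hpz]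
    field_simp
    linear_combination hpr
  have hright : ∀ z ∈ U, deriv (deriv fun t => (p t)⁻¹) z
      = (2 * z - 2 * (r z * (p z)⁻¹)) * (p z)⁻¹ := fun z hz => by
    have hpz := hne z hz
    rw [deriv_deriv_fun_inv hU hp hne hz]
    field_simp
    linear_combination 2 * hr z hz + p z * h.deriv_deriv_left z hz - p z ^ 2 * h.eq_two_mul z hz
  refine ⟨hsmooth, hinv, fun _ _ => rfl, fun z hz => ?_, hright, hwronskian⟩
  refine deriv_deriv_eq_of_wronskian_eq_const hU hinv hsmooth (c := -(2 * (α + 1)))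
    (fun t ht => ?_) hz (inv_ne_zero (hne z hz)) (hright z hz)
  linear_combination -hwronskian t ht

end Painleve34Factorization

end Factorization

section BilinearEquation

variable {𝕜 : Type*} [NontriviallyNormedField 𝕜] {U : Set 𝕜} {α : 𝕜} {w q : 𝕜 → 𝕜}
  {F : 𝕜 → 𝕜⟦X⟧}

theorem eq_zero_of_eq_zero_of_eqOn_open {X M : Type*} [TopologicalSpace X] [TopologicalSpace M]
    [T1Space M] [Zero M] {U : Set X} {E : X → M} {P : X → Prop} (hU : IsOpen U)
    (hE : ContinuousOn E U) (hnot : ∀ z ∈ U, ¬P z → E z = 0)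
    (hopen : ∀ O ⊆ U, IsOpen O → (∀ z ∈ O, P z) → ∀ z ∈ O, E z = 0) :
    ∀ z ∈ U, E z = 0 := by
  by_contra! ⟨z, hz, hEz⟩
  refine hEz (hopen (U ∩ E ⁻¹' {0}ᶜ) Set.inter_subset_left
    (hE.isOpen_inter_preimage hU isOpen_compl_singleton) (fun t ht => ?_) z ⟨hz, hEz⟩)
  by_contra hPt
  exact ht.2 (hnot t ht.1 hPt)

theorem contDiffOn_hankelDet {n : WithTop ℕ∞} {F : 𝕜 → 𝕜⟦X⟧}
    (hF : ∀ k, ContDiffOn 𝕜 n (fun z => coeff k (F z)) U) (N : ℕ) :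
    ContDiffOn 𝕜 n (fun z => hankelDet (F z) N) U := by
  simp only [hankelDet, Matrix.det_apply', Matrix.of_apply]
  exact ContDiffOn.sum fun σ _ => contDiffOn_const.mul (contDiffOn_prod fun i _ => hF _)

namespace Painleve34Factorization

theorem painleve34Bilinear_left_one {p : 𝕜 → 𝕜} (h : Painleve34Factorization U α w p q)
    (hU : IsOpen U) {z : 𝕜} (hz : z ∈ U) :
    painleve34Bilinear (w z) (4 * α + 2) p (fun _ => 1) z = 0 := by
  have hp3 : deriv (deriv (deriv p)) z = _ :=
    deriv_eq_of_forall_mem_eq hU hz h.deriv_deriv_left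
      ((((hasDerivAt_id' z).const_mul 2).fun_sub (h.hasDerivAt hU hz)).fun_mul
        (hasDerivAt_of_contDiffOn hU h.contDiffOn_left hz))
  simp only [painleve34Bilinear, hirotaD_one, hirotaD_three, hp3, deriv_const', h.eq_two_mul z hz]
  linear_combination 2 * p z * h.wronskian z hz

theorem hirotaD_two_self {p r : 𝕜 → 𝕜} (h : Painleve34Factorization U α w p q) {z : 𝕜}
    (hz : z ∈ U) (hne : p z ≠ 0)
    (hr : p z * r z = p z * deriv (deriv p) z - deriv p z ^ 2 + q z * p z ^ 3) :
    hirotaD 2 p p z = p z ^ 2 * (2 * (r z * (p z)⁻¹) - w z) := by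
  rw [hirotaD_two]
  linear_combination -2 * hr + p z ^ 2 * h.eq_two_mul z hz
    - 2 * p z * r z * mul_inv_cancel₀ hne

theorem painleve34Bilinear_hankelDet_succ
    (h : Painleve34Factorization U α w (fun z => constantCoeff (F z)) q) (hU : IsOpen U)
    (hF : SatisfiesRiccati U q F) (hne : ∀ z ∈ U, constantCoeff (F z) ≠ 0) (N : ℕ) (c : 𝕜)
    {z : 𝕜} (hz : z ∈ U) :
    painleve34Bilinear (w z) c (fun t => hankelDet (F t) (N + 2))
        (fun t => hankelDet (F t) (N + 1)) z
      = constantCoeff (F z) ^ 2 * painleve34Bilinear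
        (2 * (constantCoeff (jFractionTail (F z)) * (constantCoeff (F z))⁻¹)) c
        (fun t => hankelDet (jFractionTail (F t)) (N + 1))
        (fun t => hankelDet (jFractionTail (F t)) N) z := by
  set p := fun t => constantCoeff (F t)
  set r := fun t => constantCoeff (jFractionTail (F t))
  have hp := h.contDiffOn_left
  have hr : ∀ z ∈ U, p z * r z = p z * deriv (deriv p) z - deriv p z ^ 2 + q z * p z ^ 3 :=
    fun z hz => hF.constantCoeff_mul_constantCoeff_jFractionTail hU hz (hne z hz)
  have hH := hF.jFractionTail hU h.contDiffOn_right hp hne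
  have hsmooth (M : ℕ) : ContDiffAt 𝕜 3 (fun t => hankelDet (jFractionTail (F t)) M) z :=
    ((contDiffOn_hankelDet (hH.contDiffOn_coeff hU (h.backlund hU hne hr).contDiffOn_right
      (h.backlund hU hne hr).contDiffOn_left) M).contDiffAt (hU.mem_nhds hz)).of_le
        ENat.LEInfty.out
  have hdet (M : ℕ) : (fun t => hankelDet (F t) (M + 1)) =ᶠ[𝓝 z]
      fun t => constantCoeff (F t) * hankelDet (jFractionTail (F t)) M :=
    eventuallyEq_of_mem (hU.mem_nhds hz) fun t ht => hankelDet_succ (hne t ht) M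
  rw [painleve34Bilinear_congr (hdet (N + 1)) (hdet N)]
  exact painleve34Bilinear_gauge ((hp.contDiffAt (hU.mem_nhds hz)).of_le ENat.LEInfty.out)
    (hsmooth (N + 1)) (hsmooth N) (h.hirotaD_two_self (r := r) hz (hne z hz) (hr z hz)) c

theorem painleve34Bilinear_hankelDet
    (h : Painleve34Factorization U α w (fun z => constantCoeff (F z)) q) (hU : IsOpen U)
    (hF : SatisfiesRiccati U q F) (N : ℕ) :
    ∀ z ∈ U, painleve34Bilinear (w z) (4 * (α + N) + 2) (fun t => hankelDet (F t) (N + 1))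
      (fun t => hankelDet (F t) N) z = 0 := by
  induction N generalizing U α w q F with
  | zero =>
    intro z hz
    simpa [hankelDet] using h.painleve34Bilinear_left_one hU hz
  | succ N ih =>
    have hcoeff := hF.contDiffOn_coeff hU h.contDiffOn_right h.contDiffOn_left
    have hsmooth (M : ℕ) : ContDiffOn 𝕜 3 (fun t => hankelDet (F t) M) U :=
      (contDiffOn_hankelDet hcoeff M).of_le ENat.LEInfty.out
    refine eq_zero_of_eq_zero_of_eqOn_open (P := fun z => constantCoeff (F z) = 0) hU
      (continuousOn_painleve34Bilinear hU
        (fun z hz => (h.hasDerivAt hU hz).continuousAt.continuousWithinAt) _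
        (hsmooth (N + 2)) (hsmooth (N + 1)))
      (fun z hz hne => ?_) fun O hOU hO hzero z hz => ?_
    · let V := U ∩ {z | constantCoeff (F z) ≠ 0}
      have hV : IsOpen V :=
        h.contDiffOn_left.continuousOn.isOpen_inter_preimage hU isOpen_compl_singleton
      have hzV : z ∈ V := ⟨hz, hne⟩
      have hFV := hF.mono (V := V) Set.inter_subset_left
      have hfac := h.mono (V := V) Set.inter_subset_left
      have hneV : ∀ z ∈ V, constantCoeff (F z) ≠ 0 := fun z hz => hz.2
      rw [hfac.painleve34Bilinear_hankelDet_succ hV hFV hneV N _ hzV]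
      have := ih (hfac.backlund hV hneV fun z hz =>
        hFV.constantCoeff_mul_constantCoeff_jFractionTail hV hz hz.2) hV
          (hFV.jFractionTail hV hfac.contDiffOn_right hfac.contDiffOn_left hneV) z hzV
      rw [show α + (N + 1 : ℕ) = α + 1 + N by push_cast; ring, this, mul_zero]
    · have hFO := (hF.mono hOU).eq_zero hO hzero
      refine painleve34Bilinear_eq_zero (eventuallyEq_of_mem (hO.mem_nhds hz) fun t ht => ?_) _ _
      exact Matrix.det_eq_zero_of_row_eq_zero 0 fun j => by simp [hFO t ht]

end Painleve34Factorization

end BilinearEquation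

section Bilateral

variable {𝕜 : Type*} [NontriviallyNormedField 𝕜] {U : Set 𝕜} {α : 𝕜} {w : 𝕜 → 𝕜}
  {ψ φ : ℕ → 𝕜 → 𝕜}

/-- The determinants `τ_N` for `N : ℤ`: Hankel determinants of `ψ` for `0 ≤ N`, and of `φ`, of
size `-N`, for `N < 0`. Over `ℝ` this is `hankelTau`. -/
noncomputable def bilateralHankel (ψ φ : ℕ → 𝕜 → 𝕜) (N : ℤ) (z : 𝕜) : 𝕜 :=
  if 0 ≤ N then hankelDet (PowerSeries.mk fun n => ψ n z) N.toNat
  else hankelDet (PowerSeries.mk fun n => φ n z) (-N).toNat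

theorem bilateralHankel_natCast (N : ℕ) :
    bilateralHankel ψ φ N = fun z => hankelDet (PowerSeries.mk fun n => ψ n z) N := by
  ext z
  simp [bilateralHankel]

theorem bilateralHankel_neg_natCast (N : ℕ) :
    bilateralHankel ψ φ (-N) = fun z => hankelDet (PowerSeries.mk fun n => φ n z) N := by
  ext z
  rcases N with _ | N
  · simp [bilateralHankel, hankelDet]
  · rw [bilateralHankel, if_neg (by lia), neg_neg, Int.toNat_natCast]

theorem satisfiesRiccati_mk {q : 𝕜 → 𝕜} (hrec : ∀ n, ∀ z ∈ U,
      ψ (n + 1) z = deriv (ψ n) z + q z * ∑ k ∈ Finset.range n, ψ k z * ψ (n - 1 - k) z) :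
    SatisfiesRiccati U q fun z => PowerSeries.mk fun n => ψ n z :=
  satisfiesRiccati_iff.2 fun z hz n => by simpa only [coeff_mk] using hrec n z hz

theorem painleve34_bilinear_Dcube_general (hU : IsOpen U)
    (h : Painleve34Factorization U α w (ψ 0) (φ 0))
    (hψ : ∀ n, ∀ z ∈ U,
      ψ (n + 1) z = deriv (ψ n) z + φ 0 z * ∑ k ∈ Finset.range n, ψ k z * ψ (n - 1 - k) z)
    (hφ : ∀ n, ∀ z ∈ U,
      φ (n + 1) z = deriv (φ n) z + ψ 0 z * ∑ k ∈ Finset.range n, φ k z * φ (n - 1 - k) z)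
    (N : ℤ) {z : 𝕜} (hz : z ∈ U) :
    painleve34Bilinear (w z) (4 * (α + N) + 2) (bilateralHankel ψ φ (N + 1))
      (bilateralHankel ψ φ N) z = 0 := by
  have hτψ (n : ℕ) := Painleve34Factorization.painleve34Bilinear_hankelDet
    (by simpa using h) hU (satisfiesRiccati_mk hψ) n z hz
  have hτφ (n : ℕ) := Painleve34Factorization.painleve34Bilinear_hankelDet
    (by simpa using h.symm) hU (satisfiesRiccati_mk hφ) n z hz
  obtain ⟨n, rfl⟩ | ⟨n, rfl⟩ : (∃ n : ℕ, N = n) ∨ ∃ n : ℕ, N = -(n + 1 : ℕ) := by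
    rcases N with n | n
    exacts [.inl ⟨n, rfl⟩, .inr ⟨n, Int.negSucc_eq n⟩]
  · rw [← Nat.cast_succ, bilateralHankel_natCast, bilateralHankel_natCast]
    exact_mod_cast hτψ n
  · have hc : -(4 * (α + (-(n + 1 : ℕ) : ℤ)) + 2) = 4 * (-α + n) + 2 := by push_cast; ring
    rw [show -((n + 1 : ℕ) : ℤ) + 1 = -n by lia, bilateralHankel_neg_natCast,
      bilateralHankel_neg_natCast, painleve34Bilinear_swap, hc, hτφ n, neg_zero]

end Bilateral

theorem hankelTau_eq_bilateralHankel (ψ φ : ℕ → ℝ → ℝ) : hankelTau ψ φ = bilateralHankel ψ φ := by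
  ext N z
  simp only [hankelTau, bilateralHankel, hankelDet, coeff_mk]

/-- The bilinear equation `[D_z³ + (3w - 2z) D_z - 4(α + N + 1/2)] τ_{N+1}·τ_N = 0`, where
`D_z g·f = g'f - gf'` and `D_z³ g·f = g'''f - 3g''f' + 3g'f'' - gf'''`. -/
theorem painleve34_bilinear_Dcube
    (I : Set ℝ) (hIopen : IsOpen I) (hIconn : I.OrdConnected)
    (α : ℝ) (w ψ0 : ℝ → ℝ)
    (hw_smooth : ContDiffOn ℝ (⊤ : ℕ∞) w I)
    (hw_P34 : ∀ z ∈ I,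
      2 * w z * deriv (deriv w) z - (deriv w z) ^ 2 + 4 * (w z) ^ 3
        - 8 * z * (w z) ^ 2 + 16 * α ^ 2 = 0)
    (hψ0_smooth : ContDiffOn ℝ (⊤ : ℕ∞) ψ0 I)
    (hψ0_ne : ∀ z ∈ I, ψ0 z ≠ 0)
    (hL1 : ∀ z ∈ I, 2 * w z * deriv ψ0 z - deriv w z * ψ0 z - 4 * α * ψ0 z = 0)
    (hL2 : ∀ z ∈ I, deriv (deriv ψ0) z + (w z - 2 * z) * ψ0 z = 0)
    (ψ φ : ℕ → ℝ → ℝ)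
    (hψ_zero : ψ 0 = ψ0)
    (hφ_zero : ∀ z ∈ I, φ 0 z = w z / (2 * ψ0 z))
    (hψ_rec : ∀ n : ℕ, ∀ z ∈ I, ψ (n + 1) z =
      deriv (ψ n) z + (w z / (2 * ψ0 z)) *
        ∑ k ∈ Finset.range n, ψ k z * ψ (n - 1 - k) z)
    (hφ_rec : ∀ n : ℕ, ∀ z ∈ I, φ (n + 1) z =
      deriv (φ n) z + ψ0 z *
        ∑ k ∈ Finset.range n, φ k z * φ (n - 1 - k) z) :
    ∀ N : ℤ, ∀ z ∈ I,
    ∀ N : ℤ, ∀ z ∈ I,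
      (deriv (deriv (deriv (hankelTau ψ φ (N + 1)))) z * hankelTau ψ φ N z
        - 3 * deriv (deriv (hankelTau ψ φ (N + 1))) z * deriv (hankelTau ψ φ N) z
        + 3 * deriv (hankelTau ψ φ (N + 1)) z * deriv (deriv (hankelTau ψ φ N)) z
        - hankelTau ψ φ (N + 1) z * deriv (deriv (deriv (hankelTau ψ φ N))) z)
      + (3 * w z - 2 * z) * (deriv (hankelTau ψ φ (N + 1)) z * hankelTau ψ φ N z
        - hankelTau ψ φ (N + 1) z * deriv (hankelTau ψ φ N) z)
      - 4 * (α + (N : ℝ) + 1 / 2) * (hankelTau ψ φ (N + 1) z * hankelTau ψ φ N z) = 0 := by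
  intro _ _ _ N z hz
  subst hψ_zero
  have h : Painleve34Factorization I α w (ψ 0) (φ 0) :=
    .of_linear hIopen two_ne_zero hw_smooth hψ0_smooth hψ0_ne hL1 hL2 hφ_zero
  have hψ n z hz := (hφ_zero z hz).symm ▸ hψ_rec n z hz
  have hbilinear := painleve34_bilinear_Dcube_general hIopen h hψ hφ_rec N hz
  rw [painleve34Bilinear, hirotaD_three, hirotaD_one, ← hankelTau_eq_bilateralHankel] at hbilinear
  linear_combination hbilinear
end
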